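/- arXiv:2010.00455 — 15 statements merged into one kernel-verified Lean document; each statement's English description precedes it below -/
import Mathlib

section
/- Let M1 and M2 be finite monoids, let (π1, V1) be an irreducible complex representation of M1, and let (π2, V2) be a finite-dimensional complex representation of M2. Regard V1 ⊗_ℂ V2 as a module over M1 × M2 via (m1, m2)·(v1 ⊗ v2) = π1(m1)v1 ⊗ π2(m2)v2. If W is an (M1 × M2)-invariant subspace of V1 ⊗ V2, then there exists an M2-invariant subspace V2' of V2, unique with this property, such that W equals the image of V1 ⊗ V2' inside V1 ⊗ V2. -/
open scoped TensorProduct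

/-!
By Jacobson density and Schur's lemma, on finitely many vectors of `V₁` the algebra generated by
`M₁` realises every linear endomorphism, so an `M₁`-invariant `W ⊆ V₁ ⊗ V₂` is stable under `T ⊗ 1`
for every `T`. Expand `w ∈ W` as `∑ bᵢ ⊗ cᵢ` in a basis of `V₁`; the rank one operator taking `bⱼ`
to `u` and killing the other `bᵢ` gives `u ⊗ cⱼ ∈ W` for all `u`. Hence `W = V₁ ⊗ V₂'` for
`V₂' = {v | V₁ ⊗ v ⊆ W}`, and no other choice of `V₂'` is possible since `V₁` is faithfully flat.
-/

section RightSlice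

variable {R M N : Type*}

section Semiring

variable [CommSemiring R] [AddCommMonoid M] [Module R M] [AddCommMonoid N] [Module R N]

/-- The right slice of a submodule `W` of `M ⊗ N`: the vectors `n` with `M ⊗ n ⊆ W`. It is the
largest submodule `N'` of `N` such that the image of `M ⊗ N'` lies in `W`. -/
def rightSlice (W : Submodule R (M ⊗[R] N)) : Submodule R N :=
  ⨅ m : M, W.comap (TensorProduct.mk R M N m)

theorem mem_rightSlice {W : Submodule R (M ⊗[R] N)} {n : N} :
    n ∈ rightSlice W ↔ ∀ m : M, m ⊗ₜ[R] n ∈ W := by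
  simp [rightSlice]

theorem apply_mem_rightSlice {W : Submodule R (M ⊗[R] N)} {f : N →ₗ[R] N}
    (hf : ∀ w ∈ W, f.lTensor M w ∈ W) {n : N} (hn : n ∈ rightSlice W) : f n ∈ rightSlice W :=
  mem_rightSlice.2 fun m ↦ hf _ (mem_rightSlice.1 hn m)

theorem range_lTensor_subtype_rightSlice_le (W : Submodule R (M ⊗[R] N)) :
    LinearMap.range ((rightSlice W).subtype.lTensor M) ≤ W := by
  rintro _ ⟨x, rfl⟩
  induction x with
  | zero => simp
  | tmul m n => exact mem_rightSlice.1 n.2 m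
  | add x y hx hy => simpa only [map_add] using W.add_mem hx hy

theorem tmul_mem_range_lTensor_subtype {p : Submodule R N} {n : N} (hn : n ∈ p) (m : M) :
    m ⊗ₜ[R] n ∈ LinearMap.range (p.subtype.lTensor M) :=
  ⟨m ⊗ₜ ⟨n, hn⟩, rfl⟩

theorem rTensor_coord_smulRight_sum_tmul {ι : Type*} (b : Module.Basis ι R M) (c : ι →₀ N) (j : ι)
    (m : M) :
    ((b.coord j).smulRight m).rTensor N (c.sum fun i n ↦ b i ⊗ₜ n) = m ⊗ₜ c j := by
  rw [map_finsuppSum, Finsupp.sum_eq_single j]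
  · simp
  · intro i _ hij
    simp [hij]
  · simp

theorem range_lTensor_subtype_rightSlice_eq [Module.Free R M] {W : Submodule R (M ⊗[R] N)}
    (hW : ∀ T : Module.End R M, ∀ w ∈ W, T.rTensor N w ∈ W) :
    LinearMap.range ((rightSlice W).subtype.lTensor M) = W := by
  refine (range_lTensor_subtype_rightSlice_le W).antisymm fun w hw ↦ ?_
  let b := Module.Free.chooseBasis R M
  obtain ⟨c, rfl⟩ := TensorProduct.eq_repr_basis_left b w
  have coeff_mem (j) : c j ∈ rightSlice W := mem_rightSlice.2 fun m ↦
    rTensor_coord_smulRight_sum_tmul b c j m ▸ hW _ _ hw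
  exact Submodule.sum_mem _ fun i _ ↦ tmul_mem_range_lTensor_subtype (coeff_mem i) (b i)

theorem exists_finset_forall_eqOn_rTensor_eq (w : M ⊗[R] N) :
    ∃ s : Finset M, ∀ S T : Module.End R M, Set.EqOn S T s → S.rTensor N w = T.rTensor N w := by
  classical
  obtain ⟨t, rfl⟩ := TensorProduct.exists_finset w
  refine ⟨t.image Prod.fst, fun S T hST ↦ ?_⟩
  simp only [map_sum, LinearMap.rTensor_tmul]
  exact Finset.sum_congr rfl fun x hx ↦ by
    rw [hST (Finset.mem_coe.2 (Finset.mem_image_of_mem Prod.fst hx))]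

end Semiring

variable [CommRing R] [AddCommGroup M] [Module R M] [AddCommGroup N] [Module R N]
  [Module.FaithfullyFlat R M]

theorem eq_zero_of_forall_tmul_eq_zero {n : N} (hn : ∀ m : M, m ⊗ₜ[R] n = 0) : n = 0 := by
  have lTensor_eq_zero : (LinearMap.toSpanSingleton R N n).lTensor M = 0 := by
    ext m
    simpa using hn m
  exact (LinearMap.toSpanSingleton_eq_zero_iff R N).1 <|
    (Module.FaithfullyFlat.zero_iff_lTensor_zero R M _).2 lTensor_eq_zero

theorem rightSlice_range_lTensor_subtype (p : Submodule R N) :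
    rightSlice (LinearMap.range (p.subtype.lTensor M)) = p := by
  refine le_antisymm (fun n hn ↦ ?_) fun n hn ↦
    mem_rightSlice.2 (tmul_mem_range_lTensor_subtype hn)
  rw [← Submodule.Quotient.mk_eq_zero p]
  refine eq_zero_of_forall_tmul_eq_zero (R := R) (M := M) fun m ↦ ?_
  have tmul_mem_ker : m ⊗ₜ[R] n ∈ LinearMap.ker (p.mkQ.lTensor M) :=
    lTensor_mkQ M p ▸ mem_rightSlice.1 hn m
  exact tmul_mem_ker

end RightSlice

theorem exists_forall_smul_eq_apply_of_surjective_algebraMap_end {k A V : Type*} [CommRing k]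
    [Ring A] [Algebra k A] [AddCommGroup V] [Module k V] [Module A V] [IsScalarTower k A V]
    [IsSemisimpleModule A V] (hEnd : Function.Surjective (algebraMap k (Module.End A V)))
    (T : Module.End k V) (s : Finset V) : ∃ a : A, ∀ v ∈ s, a • v = T v := by
  let endLinear : Module.End (Module.End A V) V :=
    { T with
      map_smul' := fun φ v ↦ by
        obtain ⟨c, rfl⟩ := hEnd φ
        simp }
  obtain ⟨a, ha⟩ := jacobson_density endLinear s
  exact ⟨a, fun v hv ↦ (ha v hv).symm⟩

section Representation

open scoped MonoidAlgebra

theorem rTensor_asAlgebraHom_mem {R G V U : Type*} [CommSemiring R] [Monoid G] [AddCommMonoid V]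
    [Module R V] [AddCommMonoid U] [Module R U] {ρ : Representation R G V}
    {W : Submodule R (V ⊗[R] U)} (hW : ∀ g, ∀ w ∈ W, (ρ g).rTensor U w ∈ W) (a : R[G])
    {w : V ⊗[R] U} (hw : w ∈ W) : (ρ.asAlgebraHom a).rTensor U w ∈ W := by
  induction a using MonoidAlgebra.induction_on with
  | of g => simpa using hW g w hw
  | add a b ha hb => simpa [LinearMap.rTensor_add] using W.add_mem ha hb
  | smul c a ha => simpa [LinearMap.rTensor_smul] using W.smul_mem c ha

variable {k G V U : Type*} [Field k] [Monoid G] [AddCommGroup V] [Module k V]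
  {ρ : Representation k G V}

theorem isIrreducible_of_forall_invariant [Nontrivial V]
    (h : ∀ p : Submodule k V, (∀ g, ∀ v ∈ p, ρ g v ∈ p) → p = ⊥ ∨ p = ⊤) : ρ.IsIrreducible where
  exists_pair_ne := ⟨⊥, ⊤, fun hbot ↦
    bot_ne_top (α := Submodule k V) (congrArg Subrepresentation.toSubmodule hbot)⟩
  eq_bot_or_eq_top p := (h p.toSubmodule fun g _ hv ↦ p.apply_mem_toSubmodule g hv).imp
    (fun hp ↦ Subrepresentation.toSubmodule_injective hp)
    (fun hp ↦ Subrepresentation.toSubmodule_injective hp)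

theorem finiteDimensional_of_isIrreducible [Finite G] (ρ : Representation k G V)
    [ρ.IsIrreducible] : FiniteDimensional k V :=
  have : Module.Finite k ρ.asModule := .trans k[G] ρ.asModule
  .equiv ρ.asModuleEquiv

variable [ρ.IsIrreducible]

theorem exists_eqOn_asAlgebraHom_of_surjective_algebraMap
    (hEnd : Function.Surjective (algebraMap k (ρ.IntertwiningMap ρ))) (T : Module.End k V)
    (s : Finset V) : ∃ a : k[G], Set.EqOn (ρ.asAlgebraHom a) T s := by
  have hEnd_asModule : Function.Surjective (algebraMap k (Module.End k[G] ρ.asModule)) :=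
    (Representation.IntertwiningMap.equivAlgEnd (ρ := ρ)).surjective.comp hEnd
  exact exists_forall_smul_eq_apply_of_surjective_algebraMap_end (V := ρ.asModule)
    hEnd_asModule T s

theorem rTensor_mem_of_surjective_algebraMap [AddCommMonoid U] [Module k U]
    (hEnd : Function.Surjective (algebraMap k (ρ.IntertwiningMap ρ)))
    {W : Submodule k (V ⊗[k] U)} (hW : ∀ g, ∀ w ∈ W, (ρ g).rTensor U w ∈ W)
    (T : Module.End k V) {w : V ⊗[k] U} (hw : w ∈ W) : T.rTensor U w ∈ W := by
  obtain ⟨s, hs⟩ := exists_finset_forall_eqOn_rTensor_eq w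
  obtain ⟨a, ha⟩ := exists_eqOn_asAlgebraHom_of_surjective_algebraMap hEnd T s
  rw [← hs _ _ ha]
  exact rTensor_asAlgebraHom_mem hW a hw

end Representation

theorem stmt0_general {k M1 M2 V1 V2 : Type*} [Field k] [Monoid M1] [Monoid M2]
    [AddCommGroup V1] [Module k V1] [AddCommGroup V2] [Module k V2]
    (π1 : Representation k M1 V1) (π2 : Representation k M2 V2) [π1.IsIrreducible]
    (hEnd : Function.Surjective (algebraMap k (π1.IntertwiningMap π1)))
    (W : Submodule k (V1 ⊗[k] V2))
    (hW : ∀ (m1 : M1) (m2 : M2), ∀ w ∈ W, TensorProduct.map (π1 m1) (π2 m2) w ∈ W) :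
    ∃! p : Submodule k V2,
      (∀ (m2 : M2), ∀ v ∈ p, π2 m2 v ∈ p) ∧
      W = LinearMap.range (TensorProduct.map (LinearMap.id : V1 →ₗ[k] V1) p.subtype) := by
  have hW1 (m1 : M1) (w) (hw : w ∈ W) : (π1 m1).rTensor V2 w ∈ W := by
    simpa only [map_one] using! hW m1 1 w hw
  have hW2 (m2 : M2) (w) (hw : w ∈ W) : (π2 m2).lTensor V1 w ∈ W := by
    simpa only [map_one] using! hW 1 m2 w hw
  have : Nontrivial V1 := IsSimpleModule.nontrivial (MonoidAlgebra k M1) π1.asModule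
  refine ⟨rightSlice W, ⟨fun m2 v hv ↦ apply_mem_rightSlice (hW2 m2) hv, ?_⟩, ?_⟩
  · exact (range_lTensor_subtype_rightSlice_eq fun T _ ↦
      rTensor_mem_of_surjective_algebraMap hEnd hW1 T).symm
  · rintro q ⟨-, rfl⟩
    exact (rightSlice_range_lTensor_subtype q).symm

/-- Waldspurger's first lemma for finite monoids: if `(π₁, V₁)` is an irreducible complex
representation of `M₁` and `(π₂, V₂)` a finite-dimensional representation of `M₂`, then every
`(M₁ × M₂)`-invariant subspace `W` of `V₁ ⊗ V₂` has the form `V₁ ⊗ V₂'` for a unique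
`M₂`-invariant subspace `V₂'` of `V₂`. -/
theorem stmt0 {M1 M2 : Type*} [Monoid M1] [Monoid M2] [Finite M1] [Finite M2]
    {V1 V2 : Type*} [AddCommGroup V1] [Module ℂ V1] [AddCommGroup V2] [Module ℂ V2]
    [FiniteDimensional ℂ V2]
    (π1 : Representation ℂ M1 V1) (π2 : Representation ℂ M2 V2)
    (hV1 : Nontrivial V1)
    (hirr : ∀ p : Submodule ℂ V1, (∀ (m : M1), ∀ v ∈ p, π1 m v ∈ p) → p = ⊥ ∨ p = ⊤)
    (W : Submodule ℂ (V1 ⊗[ℂ] V2))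
    (hW : ∀ (m1 : M1) (m2 : M2), ∀ w ∈ W, TensorProduct.map (π1 m1) (π2 m2) w ∈ W) :
    ∃! p : Submodule ℂ V2,
      (∀ (m2 : M2), ∀ v ∈ p, π2 m2 v ∈ p) ∧
      W = LinearMap.range (TensorProduct.map (LinearMap.id : V1 →ₗ[ℂ] V1) p.subtype) := by
  have := isIrreducible_of_forall_invariant hirr
  have := finiteDimensional_of_isIrreducible π1
  exact stmt0_general π1 π2
    Representation.IsIrreducible.algebraMap_intertwiningMap_bijective_of_isAlgClosed.2 W hW
end

section
/- Let M be a finite monoid whose complex monoid algebra ℂ[M] is a semisimple ring, and let V and V' be simple ℂ[M]-modules. Then the complex vector space of bilinear forms B : V × V' → ℂ satisfying B(m·v, m·v') = B(v, v') for all m ∈ M, v ∈ V, v' ∈ V' has dimension at most 1. -/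
/-!
Semisimplicity of `k[M]` splits the augmentation `k[M] → k`, so `k[M]` contains a nonzero element
fixed by left multiplication by `M`. Its support is a finite nonempty set `T ⊆ M` with `m • T = T`
for every `m : M`.

Let `B` be a nonzero invariant form on simple modules `V`, `V'`. The span of `T • v` is a submodule
of `V`, nonzero for some `v`, since otherwise `B v v' = B (t • v) (t • v') = 0` for all `v`, `v'`.
So `V` is spanned by some `T • v`: it is finite-dimensional and every `m : M` acts on it
surjectively. The same holds for `V'`. Surjectivity makes both radicals of `B` submodules, so `B` is
nondegenerate, and a space of linear maps whose nonzero members are all invertible is at most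
one-dimensional over an algebraically closed field.
-/

open Function MonoidAlgebra
open scoped Pointwise

theorem exists_map_eq_one_and_forall_ker_mul_eq_zero {R S : Type*} [Ring R] [IsSemisimpleRing R]
    [Ring S] (f : R →+* S) : ∃ z : R, f z = 1 ∧ ∀ x ∈ RingHom.ker f, x * z = 0 := by
  obtain ⟨e, he, hker⟩ := IsSemisimpleRing.ideal_eq_span_idempotent (RingHom.ker f)
  have hfe : f e = 0 := by
    rw [← RingHom.mem_ker, hker]
    exact Ideal.mem_span_singleton_self e
  refine ⟨1 - e, by rw [map_sub, map_one, hfe, sub_zero], fun x hx => ?_⟩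
  rw [hker] at hx
  obtain ⟨a, rfl⟩ := Ideal.mem_span_singleton'.mp hx
  rw [mul_assoc, mul_sub, mul_one, he.eq, sub_self, mul_zero]

section LeftInvariant

variable {k M : Type*} [Monoid M]

theorem exists_ne_zero_forall_of_mul_eq_self [CommRing k] [Nontrivial k]
    [IsSemisimpleRing (MonoidAlgebra k M)] :
    ∃ z : MonoidAlgebra k M, z ≠ 0 ∧ ∀ m, of k M m * z = z := by
  let ε : MonoidAlgebra k M →ₐ[k] k := MonoidAlgebra.lift k k M 1
  obtain ⟨z, hεz, hz⟩ := exists_map_eq_one_and_forall_ker_mul_eq_zero (ε : MonoidAlgebra k M →+* k)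
  refine ⟨z, ne_zero_of_map (f := ε) (hεz.trans_ne one_ne_zero), fun m => ?_⟩
  have hm : of k M m - 1 ∈ RingHom.ker (ε : MonoidAlgebra k M →+* k) := by
    simp [RingHom.mem_ker, ε]
  rw [← sub_eq_zero, ← hz _ hm, sub_mul, one_mul]

theorem smul_support_eq_of_of_mul_eq_self [Semiring k] {z : MonoidAlgebra k M} {m : M}
    (hz : of k M m * z = z) : m • (z.coeff.support : Set M) = z.coeff.support := by
  classical
  have hsub : z.coeff.support ⊆ z.coeff.support.image (m * ·) := by
    conv_lhs => rw [← hz]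
    exact support_coeff_single_mul_subset z 1 m
  have himage := Finset.eq_of_subset_of_card_le hsub Finset.card_image_le
  conv_rhs => rw [himage, Finset.coe_image]
  rfl

variable (k) in
theorem exists_finite_nonempty_forall_smul_eq_self [CommRing k] [Nontrivial k]
    [IsSemisimpleRing (MonoidAlgebra k M)] :
    ∃ T : Set M, T.Finite ∧ T.Nonempty ∧ ∀ m : M, m • T = T := by
  obtain ⟨z, hz0, hz⟩ := exists_ne_zero_forall_of_mul_eq_self (k := k) (M := M)
  refine ⟨z.coeff.support, z.coeff.support.finite_toSet, ?_,
    fun m => smul_support_eq_of_of_mul_eq_self (hz m)⟩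
  rw [Finset.coe_nonempty, Finsupp.support_nonempty_iff]
  simpa using hz0

end LeftInvariant

section OrbitSpan

variable {k M V : Type*} [CommRing k] [Monoid M] [AddCommGroup V] [Module k V]
  [Module (MonoidAlgebra k M) V]

variable (k) in
/-- The `k`-span of the partial orbit `T • v` of a vector `v` under a subset `T` of `M`. -/
def orbitSpan (T : Set M) (v : V) : Submodule k V :=
  Submodule.span k ((fun t => of k M t • v) '' T)

theorem of_smul_mem_orbitSpan {T : Set M} {t : M} (ht : t ∈ T) (v : V) :
    of k M t • v ∈ orbitSpan k T v :=
  Submodule.subset_span ⟨t, ht, rfl⟩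

theorem finite_of_orbitSpan_eq_top {T : Set M} (hT : T.Finite) {v : V}
    (hv : orbitSpan k T v = ⊤) : Module.Finite k V :=
  .of_fg_top (hv ▸ Submodule.fg_span (hT.image _))

variable [IsScalarTower k (MonoidAlgebra k M) V]

theorem map_lsmul_orbitSpan {T : Set M} {m : M} (hT : m • T = T) (v : V) :
    (orbitSpan k T v).map (Algebra.lsmul k k V (of k M m)) = orbitSpan k T v := by
  have himage : Algebra.lsmul k k V (of k M m) '' ((fun t => of k M t • v) '' T) =
      (fun t => of k M t • v) '' (m • T) := by
    rw [Set.image_image, ← Set.image_smul, Set.image_image]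
    simp only [Algebra.lsmul_coe, smul_eq_mul, map_mul, mul_smul]
  rw [orbitSpan, Submodule.map_span, himage, hT]

theorem surjective_of_smul_of_orbitSpan_eq_top {T : Set M} {m : M} (hT : m • T = T) {v : V}
    (hv : orbitSpan k T v = ⊤) : Surjective fun w : V => of k M m • w := by
  have hmap := map_lsmul_orbitSpan (k := k) hT v
  rw [hv, Submodule.map_top] at hmap
  exact LinearMap.range_eq_top.mp hmap

theorem eq_bot_or_eq_top_of_forall_of_smul_mem [IsSimpleModule (MonoidAlgebra k M) V]
    (W : Submodule k V) (hW : ∀ (m : M), ∀ w ∈ W, of k M m • w ∈ W) : W = ⊥ ∨ W = ⊤ := by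
  refine (eq_bot_or_eq_top (submoduleOfSMulMem W hW)).imp (fun h => ?_) (fun h => ?_) <;>
    exact SetLike.coe_injective (congrArg SetLike.coe h :)

theorem orbitSpan_eq_bot_or_eq_top [IsSimpleModule (MonoidAlgebra k M) V] {T : Set M}
    (hT : ∀ m : M, m • T = T) (v : V) : orbitSpan k T v = ⊥ ∨ orbitSpan k T v = ⊤ :=
  eq_bot_or_eq_top_of_forall_of_smul_mem _ fun m _ hw =>
    map_lsmul_orbitSpan (k := k) (hT m) v ▸
      Submodule.mem_map_of_mem (f := Algebra.lsmul k k V (of k M m)) hw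

end OrbitSpan

section InvariantForms

variable {k M V V' : Type*} [CommRing k] [Monoid M]
  [AddCommGroup V] [Module k V] [Module (MonoidAlgebra k M) V]
  [AddCommGroup V'] [Module k V'] [Module (MonoidAlgebra k M) V']

variable (k M V V') in
/-- The space of `M`-invariant bilinear forms `V × V' → k`, in curried form. -/
def invariantForms : Submodule k (V →ₗ[k] V' →ₗ[k] k) where
  carrier := {B | ∀ (m : M) (v : V) (v' : V'), B (of k M m • v) (of k M m • v') = B v v'}
  zero_mem' _ _ _ := rfl
  add_mem' hB hC m v v' := congrArg₂ (· + ·) (hB m v v') (hC m v v')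
  smul_mem' c _ hB m v v' := congrArg (c • ·) (hB m v v')

variable {B : V →ₗ[k] V' →ₗ[k] k}

theorem flip_mem_invariantForms (hB : B ∈ invariantForms k M V V') :
    B.flip ∈ invariantForms k M V' V :=
  fun m v' v => hB m v v'

theorem injective_of_mem_invariantForms [IsScalarTower k (MonoidAlgebra k M) V]
    [IsSimpleModule (MonoidAlgebra k M) V] (hB : B ∈ invariantForms k M V V') (hB0 : B ≠ 0)
    (hsurj : ∀ m : M, Surjective fun v' : V' => of k M m • v') : Injective B := by
  have hstable : ∀ (m : M), ∀ v ∈ LinearMap.ker B, of k M m • v ∈ LinearMap.ker B := by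
    intro m v hv
    rw [LinearMap.mem_ker] at hv ⊢
    ext v'
    obtain ⟨w', rfl⟩ := hsurj m v'
    rw [hB m v w', hv, LinearMap.zero_apply, LinearMap.zero_apply]
  refine LinearMap.ker_eq_bot.mp <|
    (eq_bot_or_eq_top_of_forall_of_smul_mem _ hstable).resolve_right fun htop => ?_
  exact hB0 (LinearMap.ker_eq_top.mp htop)

theorem exists_orbitSpan_eq_top_of_mem_invariantForms [IsScalarTower k (MonoidAlgebra k M) V]
    [IsSimpleModule (MonoidAlgebra k M) V] {T : Set M} (hne : T.Nonempty)
    (hT : ∀ m : M, m • T = T) (hB : B ∈ invariantForms k M V V') (hB0 : B ≠ 0) :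
    ∃ v : V, orbitSpan k T v = ⊤ := by
  obtain ⟨t, ht⟩ := hne
  by_contra! hproper
  refine hB0 (LinearMap.ext₂ fun v v' => ?_)
  have htv : of k M t • v = 0 := by
    rw [← Submodule.mem_bot k, ← (orbitSpan_eq_bot_or_eq_top hT v).resolve_right (hproper v)]
    exact of_smul_mem_orbitSpan ht v
  rw [← hB t v v', htv, map_zero, LinearMap.zero_apply, LinearMap.zero_apply,
    LinearMap.zero_apply]

theorem finite_of_mem_invariantForms [IsScalarTower k (MonoidAlgebra k M) V]
    [IsSimpleModule (MonoidAlgebra k M) V] {T : Set M} (hfin : T.Finite) (hne : T.Nonempty)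
    (hT : ∀ m : M, m • T = T) (hB : B ∈ invariantForms k M V V') (hB0 : B ≠ 0) :
    Module.Finite k V := by
  obtain ⟨v, hv⟩ := exists_orbitSpan_eq_top_of_mem_invariantForms hne hT hB hB0
  exact finite_of_orbitSpan_eq_top hfin hv

theorem surjective_of_smul_of_mem_invariantForms [IsScalarTower k (MonoidAlgebra k M) V]
    [IsSimpleModule (MonoidAlgebra k M) V] {T : Set M} (hne : T.Nonempty)
    (hT : ∀ m : M, m • T = T) (hB : B ∈ invariantForms k M V V') (hB0 : B ≠ 0) (m : M) :
    Surjective fun v : V => of k M m • v := by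
  obtain ⟨v, hv⟩ := exists_orbitSpan_eq_top_of_mem_invariantForms hne hT hB hB0
  exact surjective_of_smul_of_orbitSpan_eq_top (hT m) hv

end InvariantForms

theorem isPerfPair_of_mem_invariantForms {k M V V' : Type*} [Field k] [Monoid M]
    [AddCommGroup V] [Module k V] [Module (MonoidAlgebra k M) V]
    [IsScalarTower k (MonoidAlgebra k M) V] [IsSimpleModule (MonoidAlgebra k M) V]
    [AddCommGroup V'] [Module k V'] [Module (MonoidAlgebra k M) V']
    [IsScalarTower k (MonoidAlgebra k M) V'] [IsSimpleModule (MonoidAlgebra k M) V']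
    {B : V →ₗ[k] V' →ₗ[k] k} {T : Set M} (hfin : T.Finite) (hne : T.Nonempty)
    (hT : ∀ m : M, m • T = T) (hB : B ∈ invariantForms k M V V') (hB0 : B ≠ 0) :
    B.IsPerfPair := by
  have hflip : B.flip ∈ invariantForms k M V' V := flip_mem_invariantForms hB
  have hflip0 : B.flip ≠ 0 := fun h => hB0 (LinearMap.flip_inj h)
  have : Module.Finite k V := finite_of_mem_invariantForms hfin hne hT hB hB0
  exact .of_injective
    (injective_of_mem_invariantForms hB hB0
      (surjective_of_smul_of_mem_invariantForms hne hT hflip hflip0))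
    (injective_of_mem_invariantForms hflip hflip0
      (surjective_of_smul_of_mem_invariantForms hne hT hB hB0))

theorem rank_le_one_of_forall_bijective {K V W : Type*} [Field K] [IsAlgClosed K]
    [AddCommGroup V] [Module K V] [FiniteDimensional K V] [AddCommGroup W] [Module K W]
    (S : Submodule K (V →ₗ[K] W)) (hS : ∀ f ∈ S, f ≠ 0 → Bijective f) :
    Module.rank K S ≤ 1 := by
  obtain rfl | hne := eq_or_ne S ⊥
  · simp
  obtain ⟨f, hf, hf0⟩ := S.exists_mem_ne_zero_of_ne_bot hne
  have : Nontrivial V := not_subsingleton_iff_nontrivial.mp fun _ => hf0 (Subsingleton.elim _ _)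
  let E : V ≃ₗ[K] W := LinearEquiv.ofBijective f (hS f hf hf0)
  refine rank_le_one (⟨f, hf⟩ : S) fun ⟨g, hg⟩ => ?_
  obtain ⟨c, hc⟩ := Module.End.exists_eigenvalue (E.symm.toLinearMap ∘ₗ g)
  obtain ⟨v, hv⟩ := hc.exists_hasEigenvector
  have hgv : g v = c • f v := by
    have heigen : E.symm (g v) = c • v := hv.apply_eq_smul
    rwa [LinearEquiv.symm_apply_eq, map_smul] at heigen
  have hker : (g - c • f) v = 0 := by
    rw [LinearMap.sub_apply, LinearMap.smul_apply, hgv, sub_self]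
  have hzero : g - c • f = 0 := by
    by_contra h0
    have hbij := hS _ (S.sub_mem hg (S.smul_mem c hf)) h0
    exact hv.2 (hbij.injective (hker.trans (map_zero _).symm))
  exact ⟨c, Subtype.ext (sub_eq_zero.mp hzero).symm⟩

theorem stmt2_general {k M : Type*} [Field k] [IsAlgClosed k] [Monoid M]
    {T : Set M} (hfin : T.Finite) (hne : T.Nonempty) (hT : ∀ m : M, m • T = T)
    {V V' : Type*} [AddCommGroup V] [Module k V] [Module (MonoidAlgebra k M) V]
    [IsScalarTower k (MonoidAlgebra k M) V] [IsSimpleModule (MonoidAlgebra k M) V]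
    [AddCommGroup V'] [Module k V'] [Module (MonoidAlgebra k M) V']
    [IsScalarTower k (MonoidAlgebra k M) V'] [IsSimpleModule (MonoidAlgebra k M) V'] :
    Module.rank k (invariantForms k M V V') ≤ 1 := by
  obtain hbot | hbot := eq_or_ne (invariantForms k M V V') ⊥
  · rw [hbot, rank_bot]
    exact zero_le_one
  obtain ⟨B, hB, hB0⟩ := Submodule.exists_mem_ne_zero_of_ne_bot hbot
  have : Module.Finite k V := finite_of_mem_invariantForms hfin hne hT hB hB0
  exact rank_le_one_of_forall_bijective _ fun C hC hC0 =>
    (isPerfPair_of_mem_invariantForms hfin hne hT hC hC0).bijective_left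

/-- Let `M` be a finite monoid with `ℂ[M]` semisimple, and let `V, V'` be simple
`ℂ[M]`-modules.  The space of `M`-invariant bilinear forms `V × V' → ℂ` has dimension
at most `1`. -/
theorem stmt2 {M : Type*} [Monoid M] [Finite M]
    (hM : IsSemisimpleRing (MonoidAlgebra ℂ M))
    {V V' : Type*} [AddCommGroup V] [Module ℂ V] [Module (MonoidAlgebra ℂ M) V]
    [IsScalarTower ℂ (MonoidAlgebra ℂ M) V]
    [AddCommGroup V'] [Module ℂ V'] [Module (MonoidAlgebra ℂ M) V']
    [IsScalarTower ℂ (MonoidAlgebra ℂ M) V']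
    (hV : IsSimpleModule (MonoidAlgebra ℂ M) V)
    (hV' : IsSimpleModule (MonoidAlgebra ℂ M) V')
    (S : Submodule ℂ (V →ₗ[ℂ] V' →ₗ[ℂ] ℂ))
    (hS : ∀ B : V →ₗ[ℂ] V' →ₗ[ℂ] ℂ, B ∈ S ↔
      ∀ (m : M) (v : V) (v' : V'),
        B ((MonoidAlgebra.of ℂ M m) • v) ((MonoidAlgebra.of ℂ M m) • v') = B v v') :
    Module.rank ℂ ↥S ≤ 1 := by
  obtain ⟨T, hfin, hne, hT⟩ := exists_finite_nonempty_forall_smul_eq_self ℂ (M := M)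
  obtain rfl : S = invariantForms ℂ M V V' := Submodule.ext hS
  exact stmt2_general hfin hne hT
end

section
/- Let M be a finite monoid and N a submonoid of M containing the identity, and suppose both ℂ[M] and ℂ[N] are semisimple rings. Set A = ℂ[M] and B = ℂ[N], so that B is a subalgebra of A. Then for every finite-dimensional B-module W, the induced A-module A ⊗_B W is isomorphic, as an A-module, to the coinduced A-module Hom_B(A, W) consisting of all left-B-linear maps f : A → W, with A acting by (a·f)(x) = f(xa). -/
open scoped TensorProduct

/-!
A finite-dimensional semisimple algebra over an algebraically closed field is a product of matrix
algebras, so the sum of the traces of the blocks is a symmetrizing form on it. Let `l` and `m` be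
such forms on `A` and on the subalgebra `B`. The adjoint `E : A → B` of the inclusion, given by
`m (E a * b) = l (a * b)`, is a `B`-bimodule map, and every left `B`-linear map `A → B` is
`x ↦ E (x * y)` for some `y`. As `A` is projective over `B`, it has a finite dual basis, whose
coordinate forms are thus `E (· * y i)`: the extension is Frobenius. Then
`a ⊗ w ↦ (x ↦ E (x * a) • w)` is the required isomorphism.
-/

section SymmetrizingForm

variable {k A : Type*} [CommRing k] [Ring A] [Algebra k A]

/-- A linear form `l` on a `k`-algebra `A` is *symmetrizing* if it is a trace form and the pairing
`(a, x) ↦ l (a * x)` identifies `A` with its dual; an algebra with such a form is a symmetric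
algebra. -/
structure IsSymmetrizingForm (l : A →ₗ[k] k) : Prop where
  map_mul_comm : ∀ a b, l (a * b) = l (b * a)
  bijective : Function.Bijective ((LinearMap.mul k A).compr₂ l)

namespace IsSymmetrizingForm

variable {l : A →ₗ[k] k}

theorem mul_right_ext (hl : IsSymmetrizingForm l) {a b : A} (h : ∀ x, l (a * x) = l (b * x)) :
    a = b :=
  hl.bijective.injective (LinearMap.ext h)

theorem exists_mul_eq (hl : IsSymmetrizingForm l) (f : A →ₗ[k] k) : ∃ y, ∀ x, l (y * x) = f x :=
  (hl.bijective.surjective f).imp fun _ hy x ↦ LinearMap.congr_fun hy x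

theorem comp_algEquiv {A' : Type*} [Ring A'] [Algebra k A'] (hl : IsSymmetrizingForm l)
    (e : A' ≃ₐ[k] A) : IsSymmetrizingForm (l ∘ₗ e.toLinearMap) where
  map_mul_comm a b := by simp [hl.map_mul_comm (e a)]
  bijective := by
    refine ⟨fun a b hab ↦ e.injective <| hl.mul_right_ext fun x ↦ ?_, fun f ↦ ?_⟩
    · simpa using LinearMap.congr_fun hab (e.symm x)
    · obtain ⟨y, hy⟩ := hl.exists_mul_eq (f ∘ₗ e.symm.toLinearMap)
      exact ⟨e.symm y, LinearMap.ext fun x ↦ by simp [hy]⟩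

theorem sum_comp_proj {ι : Type*} [Fintype ι] {R : ι → Type*} [∀ i, Ring (R i)]
    [∀ i, Algebra k (R i)] {l : ∀ i, R i →ₗ[k] k} (hl : ∀ i, IsSymmetrizingForm (l i)) :
    IsSymmetrizingForm (∑ i, l i ∘ₗ LinearMap.proj i) where
  map_mul_comm a b := by simp [(hl _).map_mul_comm (a _)]
  bijective := by
    classical
    refine ⟨fun a b hab ↦ funext fun i ↦ (hl i).mul_right_ext fun x ↦ ?_, fun f ↦ ?_⟩
    · have sum_eq (c : ∀ i, R i) : ∑ j, l j (c j * Pi.single i x j) = l i (c i * x) := by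
        rw [Fintype.sum_eq_single i fun j hj ↦ by simp [hj], Pi.single_eq_same]
      simpa [sum_eq] using LinearMap.congr_fun hab (Pi.single i x)
    · choose y hy using fun i ↦ (hl i).exists_mul_eq (f ∘ₗ LinearMap.single k R i)
      refine ⟨y, LinearMap.ext fun x ↦ ?_⟩
      simp [hy, ← map_sum, Finset.univ_sum_single]

theorem matrix_trace {n : Type*} [Fintype n] [DecidableEq n] :
    IsSymmetrizingForm (Matrix.traceLinearMap n k k) where
  map_mul_comm := Matrix.trace_mul_comm
  bijective := by
    refine ⟨fun a b hab ↦ Matrix.ext_iff_trace_mul_right.2 (LinearMap.congr_fun hab), fun f ↦ ?_⟩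
    refine ⟨.of fun i j ↦ f (.single j i 1), Matrix.ext_linearMap _ fun i j ↦ ?_⟩
    ext
    simp [Matrix.trace_mul_single]

theorem exists_of_isSemisimpleRing (k A : Type*) [Field k] [IsAlgClosed k] [Ring A] [Algebra k A]
    [FiniteDimensional k A] [IsSemisimpleRing A] : ∃ l : A →ₗ[k] k, IsSymmetrizingForm l := by
  obtain ⟨n, d, -, ⟨e⟩⟩ := IsSemisimpleRing.exists_algEquiv_pi_matrix_of_isAlgClosed k A
  exact ⟨_, (sum_comp_proj fun _ ↦ matrix_trace).comp_algEquiv e⟩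

end IsSymmetrizingForm

end SymmetrizingForm

section InducedModule

variable {k A : Type*} [CommRing k] [Ring A] [Algebra k A] (B : Subalgebra k A)
variable (W : Type*) [AddCommGroup W] [Module k W] [Module B W]

/-- The `A`-submodule of `A ⊗[k] W` generated by the relations `a * b ⊗ w = a ⊗ b • w`, `b ∈ B`. -/
def balancingSubmodule : Submodule A (A ⊗[k] W) :=
  Submodule.span A {z | ∃ (a : A) (b : B) (w : W), z = (a * (b : A)) ⊗ₜ[k] w - a ⊗ₜ[k] (b • w)}

/-- The induced module `A ⊗_B W`, realized as a quotient of `A ⊗[k] W` because Mathlib's tensor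
product requires a commutative base ring. -/
abbrev InducedModule : Type _ := (A ⊗[k] W) ⧸ balancingSubmodule B W

namespace InducedModule

variable {W}

/-- The class of the pure tensor `a ⊗ w` in `A ⊗_B W`, as a `k`-bilinear map. -/
def mk : A →ₗ[k] W →ₗ[k] InducedModule B W :=
  (TensorProduct.mk k A W).compr₂ ((balancingSubmodule B W).mkQ.restrictScalars k)

variable {B}

theorem mk_mul_coe (a : A) (b : B) (w : W) : mk B (a * b) w = mk B a (b • w) :=
  (Submodule.Quotient.eq _).2 <| Submodule.subset_span ⟨a, b, w, rfl⟩

@[elab_as_elim]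
theorem induction_on {motive : InducedModule B W → Prop} (q : InducedModule B W)
    (mk : ∀ a w, motive (mk B a w)) (add : ∀ p q, motive p → motive q → motive (p + q)) :
    motive q := by
  obtain ⟨t, rfl⟩ := (balancingSubmodule B W).mkQ_surjective q
  induction t with
  | zero => simpa using mk 0 0
  | tmul a w => exact mk a w
  | add t u ht hu => simpa using add _ _ ht hu

variable {X : Type*} [AddCommGroup X] [Module k X] [Module A X] [IsScalarTower k A X]

/-- The universal property of `A ⊗_B W`: a `B`-linear map from `W` to an `A`-module extends to an
`A`-linear map. -/
def lift (f : W →ₗ[k] X) (hf : ∀ (b : B) (w : W), f (b • w) = (b : A) • f w) :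
    InducedModule B W →ₗ[A] X :=
  (balancingSubmodule B W).liftQ
    (TensorProduct.AlgebraTensorModule.lift (LinearMap.toSpanSingleton A (W →ₗ[k] X) f)) <| by
      refine Submodule.span_le.2 ?_
      rintro _ ⟨a, b, w, rfl⟩
      simp [hf, mul_smul]

theorem lift_mk (f : W →ₗ[k] X) (hf : ∀ (b : B) (w : W), f (b • w) = (b : A) • f w) (a : A)
    (w : W) : lift f hf (mk B a w) = a • f w :=
  rfl

end InducedModule

end InducedModule

section CoinducedModule

variable {k A : Type*} [CommRing k] [Ring A] [Algebra k A] (B : Subalgebra k A)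
variable (W : Type*) [AddCommGroup W] [Module B W]

/-- The coinduced module `Hom_B(A, W)`; a type synonym carrying the `A`-action
`(a • f) x = f (x * a)`. -/
def CoinducedModule : Type _ := A →ₗ[B] W

namespace CoinducedModule

instance : AddCommGroup (CoinducedModule B W) := inferInstanceAs (AddCommGroup (A →ₗ[B] W))

instance : FunLike (CoinducedModule B W) A W := inferInstanceAs (FunLike (A →ₗ[B] W) A W)

instance : LinearMapClass (CoinducedModule B W) B A W :=
  inferInstanceAs (LinearMapClass (A →ₗ[B] W) B A W)

instance : Module A (CoinducedModule B W) where
  smul a f := LinearMap.comp f (LinearMap.mulRight B a)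
  one_smul f := DFunLike.ext _ _ fun x ↦ congrArg f (mul_one x)
  mul_smul a b f := DFunLike.ext _ _ fun x ↦ congrArg f (mul_assoc x a b).symm
  smul_zero _ := rfl
  smul_add _ _ _ := rfl
  add_smul a b f := DFunLike.ext _ _ fun x ↦ (congrArg f (mul_add x a b)).trans (map_add f _ _)
  zero_smul f := DFunLike.ext _ _ fun x ↦ (congrArg f (mul_zero x)).trans (map_zero f)

variable {B W}

theorem smul_apply (a : A) (f : CoinducedModule B W) (x : A) : (a • f) x = f (x * a) :=
  rfl

theorem add_apply (f g : CoinducedModule B W) (x : A) : (f + g) x = f x + g x :=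
  rfl

variable [Module k W] [IsScalarTower k B W]

instance : Module k (CoinducedModule B W) := inferInstanceAs (Module k (A →ₗ[B] W))

instance : IsScalarTower k A (CoinducedModule B W) where
  smul_assoc c a f := DFunLike.ext _ _ fun x ↦
    (congrArg f (mul_smul_comm c x a)).trans (LinearMap.map_smul_of_tower f c (x * a))

end CoinducedModule

end CoinducedModule

section FrobeniusExtension

variable {k A : Type*} [CommRing k] [Ring A] [Algebra k A] {B : Subalgebra k A}

/-- A Frobenius system for a ring extension `B ⊆ A`: a `B`-bimodule map `hom : A → B` (the Frobenius
homomorphism), together with finite families `left` and `right` that are dual bases with respect to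
`hom`. An extension with a Frobenius system is a Frobenius extension. -/
structure FrobeniusSystem (B : Subalgebra k A) (ι : Type*) [Fintype ι] where
  hom : A →ₗ[B] B
  map_mul_coe : ∀ (a : A) (b : B), hom (a * b) = hom a * b
  left : ι → A
  right : ι → A
  sum_hom_mul_left_smul_right : ∀ a, ∑ i, hom (a * left i) • right i = a
  sum_left_mul_hom_right_mul : ∀ a, ∑ i, left i * hom (right i * a) = a

namespace FrobeniusSystem

variable {ι : Type*} [Fintype ι] (F : FrobeniusSystem B ι)
variable {W : Type*} [AddCommGroup W] [Module k W] [Module B W] [IsScalarTower k B W]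

variable (W) in
/-- The `B`-linear map `W → Hom_B(A, W)` sending `w` to `x ↦ hom x • w`. -/
def toCoinduced : W →ₗ[k] CoinducedModule B W where
  toFun w := (LinearMap.toSpanSingleton B W w) ∘ₗ F.hom
  map_add' v w := DFunLike.ext _ _ fun x ↦ smul_add (F.hom x) v w
  map_smul' c w := DFunLike.ext _ _ fun x ↦ smul_comm (F.hom x) c w

theorem toCoinduced_apply (w : W) (x : A) : F.toCoinduced W w x = F.hom x • w :=
  rfl

theorem toCoinduced_smul (b : B) (w : W) :
    F.toCoinduced W (b • w) = (b : A) • F.toCoinduced W w :=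
  DFunLike.ext _ _ fun x ↦ by
    rw [CoinducedModule.smul_apply, toCoinduced_apply, toCoinduced_apply, F.map_mul_coe, mul_smul]

variable (W) in
/-- The comparison map `A ⊗_B W → Hom_B(A, W)` sending `a ⊗ w` to `x ↦ hom (x * a) • w`. -/
def inducedToCoinduced : InducedModule B W →ₗ[A] CoinducedModule B W :=
  InducedModule.lift (F.toCoinduced W) F.toCoinduced_smul

theorem inducedToCoinduced_mk_apply (a : A) (w : W) (x : A) :
    F.inducedToCoinduced W (InducedModule.mk B a w) x = F.hom (x * a) • w := by
  rw [inducedToCoinduced, InducedModule.lift_mk, CoinducedModule.smul_apply, toCoinduced_apply]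

theorem sum_mk_inducedToCoinduced (q : InducedModule B W) :
    ∑ i, InducedModule.mk B (F.left i) (F.inducedToCoinduced W q (F.right i)) = q := by
  induction q using InducedModule.induction_on with
  | mk a w =>
    simp only [inducedToCoinduced_mk_apply, ← InducedModule.mk_mul_coe]
    rw [← LinearMap.sum_apply, ← map_sum, F.sum_left_mul_hom_right_mul]
  | add p q hp hq =>
    simp only [map_add, CoinducedModule.add_apply, Finset.sum_add_distrib, hp, hq]

theorem inducedToCoinduced_sum_mk (f : CoinducedModule B W) :
    F.inducedToCoinduced W (∑ i, InducedModule.mk B (F.left i) (f (F.right i))) = f := by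
  refine DFunLike.ext _ _ fun x ↦ ?_
  calc
    F.inducedToCoinduced W (∑ i, InducedModule.mk B (F.left i) (f (F.right i))) x
      = ∑ i, F.hom (x * F.left i) • f (F.right i) := by
        rw [map_sum]
        exact LinearMap.sum_apply _ _ _
    _ = f (∑ i, F.hom (x * F.left i) • F.right i) := by simp only [map_sum, map_smul]
    _ = f x := by rw [F.sum_hom_mul_left_smul_right]

variable (W) in
/-- Over a Frobenius extension induction and coinduction agree. -/
def inducedEquivCoinduced : InducedModule B W ≃ₗ[A] CoinducedModule B W where
  __ := F.inducedToCoinduced W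
  invFun f := ∑ i, InducedModule.mk B (F.left i) (f (F.right i))
  left_inv := F.sum_mk_inducedToCoinduced
  right_inv := F.inducedToCoinduced_sum_mk

end FrobeniusSystem

theorem exists_sum_smul_eq_self_of_projective (R P : Type*) [Semiring R] [AddCommMonoid P]
    [Module R P] [Module.Finite R P] [Module.Projective R P] :
    ∃ (n : ℕ) (z : Fin n → P) (φ : Fin n → P →ₗ[R] R), ∀ a, ∑ i, φ i a • z i = a := by
  obtain ⟨n, p, s, -, -, hps⟩ := Module.Finite.exists_comp_eq_id_of_projective R P
  refine ⟨n, fun i ↦ p (Pi.single i 1), fun i ↦ LinearMap.proj i ∘ₗ s, fun a ↦ ?_⟩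
  calc
    ∑ i, s a i • p (Pi.single i 1) = p (s a) := by
      conv_rhs => rw [pi_eq_sum_univ' (s a)]
      simp only [map_sum, map_smul]
    _ = a := LinearMap.congr_fun hps a

namespace IsSymmetrizingForm

variable {l : A →ₗ[k] k} {m : B →ₗ[k] k}

theorem exists_adjoint_val (hl : IsSymmetrizingForm l) (hm : IsSymmetrizingForm m) :
    ∃ E : A →ₗ[B] B, (∀ a (b : B), m (E a * b) = l (a * b)) ∧
      ∀ a (b : B), E (a * b) = E a * b := by
  choose E hE using fun a ↦ hm.exists_mul_eq (l ∘ₗ LinearMap.mulLeft k a ∘ₗ B.val.toLinearMap)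
  replace hE (a : A) (b : B) : m (E a * b) = l (a * b) := hE a b
  have map_add (a a' : A) : E (a + a') = E a + E a' :=
    hm.mul_right_ext fun x ↦ by simp only [add_mul, _root_.map_add, hE]
  have map_smul (b : B) (a : A) : E (b • a) = b * E a :=
    hm.mul_right_ext fun x ↦ by
      rw [hE, mul_assoc, hm.map_mul_comm, mul_assoc, hE, Subalgebra.smul_def, smul_eq_mul,
        mul_assoc, hl.map_mul_comm, mul_assoc, Subalgebra.coe_mul]
  have map_mul_coe (a : A) (b : B) : E (a * b) = E a * b :=
    hm.mul_right_ext fun x ↦ by rw [hE, mul_assoc, mul_assoc, hE, Subalgebra.coe_mul]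
  exact ⟨⟨⟨E, map_add⟩, map_smul⟩, hE, map_mul_coe⟩

theorem exists_adjoint_mul_eq (hl : IsSymmetrizingForm l) (hm : IsSymmetrizingForm m)
    {E : A →ₗ[B] B} (hE : ∀ a (b : B), m (E a * b) = l (a * b)) (φ : A →ₗ[B] B) :
    ∃ y, ∀ x, E (x * y) = φ x := by
  obtain ⟨y, hy⟩ := hl.exists_mul_eq (m ∘ₗ φ.restrictScalars k)
  replace hy (x : A) : l (y * x) = m (φ x) := hy x
  refine ⟨y, fun x ↦ hm.mul_right_ext fun b ↦ ?_⟩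
  calc
    m (E (x * y) * b) = l (y * (b • x)) := by
      rw [hE, mul_assoc, hl.map_mul_comm, mul_assoc, Subalgebra.smul_def, smul_eq_mul]
    _ = m (φ x * b) := by rw [hy, map_smul, smul_eq_mul, hm.map_mul_comm]

theorem sum_mul_adjoint_mul_eq (hl : IsSymmetrizingForm l) (hm : IsSymmetrizingForm m)
    {E : A →ₗ[B] B} (hE : ∀ a (b : B), m (E a * b) = l (a * b)) {ι : Type*} [Fintype ι]
    {y z : ι → A} (sum_smul : ∀ a, ∑ i, E (a * y i) • z i = a) (a : A) :
    ∑ i, y i * E (z i * a) = a := by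
  refine hl.mul_right_ext fun x ↦ ?_
  calc
    l ((∑ i, y i * E (z i * a)) * x) = ∑ i, l (x * y i * E (z i * a)) := by
      simp only [hl.map_mul_comm _ x, Finset.mul_sum, map_sum, mul_assoc]
    _ = ∑ i, l (z i * a * E (x * y i)) := by
      simp only [← hE, hm.map_mul_comm]
    _ = l (a * ∑ i, E (x * y i) • z i) := by
      simp only [Finset.mul_sum, map_sum, mul_assoc, hl.map_mul_comm (z _), Subalgebra.smul_def,
        smul_eq_mul]
    _ = l (a * x) := by rw [sum_smul]

theorem exists_frobeniusSystem [Module.Finite B A] [Module.Projective B A]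
    (hl : IsSymmetrizingForm l) (hm : IsSymmetrizingForm m) :
    ∃ n, Nonempty (FrobeniusSystem B (Fin n)) := by
  obtain ⟨E, hE, map_mul_coe⟩ := exists_adjoint_val hl hm
  obtain ⟨n, z, φ, sum_smul⟩ := exists_sum_smul_eq_self_of_projective B A
  choose y hy using fun i ↦ exists_adjoint_mul_eq hl hm hE (φ i)
  simp only [← hy] at sum_smul
  exact ⟨n, ⟨⟨E, map_mul_coe, y, z, sum_smul, sum_mul_adjoint_mul_eq hl hm hE sum_smul⟩⟩⟩

end IsSymmetrizingForm

end FrobeniusExtension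

section MonoidAlgebra

variable (k : Type*) {M : Type*} [CommRing k] [Monoid M] (N : Submonoid M)

theorem toSubmodule_range_mapDomainAlgHom_subtype :
    Subalgebra.toSubmodule (MonoidAlgebra.mapDomainAlgHom k k N.subtype).range =
      Submodule.span k (MonoidAlgebra.of k M '' N) := by
  apply le_antisymm
  · rintro _ ⟨z, rfl⟩
    induction z using MonoidAlgebra.induction_on with
    | of n => exact Submodule.subset_span ⟨n, n.2, by simp⟩
    | add f g hf hg => simpa [MonoidAlgebra.mapDomain_add] using add_mem hf hg
    | smul r f hf => simpa using Submodule.smul_mem _ r hf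
  · refine Submodule.span_le.2 ?_
    rintro _ ⟨n, hn, rfl⟩
    exact ⟨MonoidAlgebra.of k N ⟨n, hn⟩, by simp⟩

variable {k N}

theorem isSemisimpleRing_of_toSubmodule_eq_span [IsSemisimpleRing (MonoidAlgebra k N)]
    {B : Subalgebra k (MonoidAlgebra k M)}
    (hB : Subalgebra.toSubmodule B = Submodule.span k (MonoidAlgebra.of k M '' N)) :
    IsSemisimpleRing B := by
  let F := MonoidAlgebra.mapDomainAlgHom k k N.subtype
  have hF : Function.Injective F := MonoidAlgebra.mapDomain_injective Subtype.val_injective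
  obtain rfl : F.range = B :=
    Subalgebra.toSubmodule_injective <|
      (toSubmodule_range_mapDomainAlgHom_subtype k N).trans hB.symm
  exact (AlgEquiv.ofInjective F hF).toRingEquiv.isSemisimpleRing

end MonoidAlgebra

theorem stmt3_general {k A : Type*} [Field k] [IsAlgClosed k] [Ring A] [Algebra k A]
    [FiniteDimensional k A] [IsSemisimpleRing A] (B : Subalgebra k A) [IsSemisimpleRing B]
    (W : Type*) [AddCommGroup W] [Module k W] [Module B W] [IsScalarTower k B W] :
    Nonempty (InducedModule B W ≃ₗ[A] CoinducedModule B W) := by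
  obtain ⟨l, hl⟩ := IsSymmetrizingForm.exists_of_isSemisimpleRing k A
  obtain ⟨m, hm⟩ := IsSymmetrizingForm.exists_of_isSemisimpleRing k B
  have : Module.Finite B A := Module.Finite.of_restrictScalars_finite k B A
  have : Module.Projective B A := Module.projective_of_isSemisimpleRing B A
  obtain ⟨n, ⟨F⟩⟩ := hl.exists_frobeniusSystem hm
  exact ⟨F.inducedEquivCoinduced W⟩

/-- Let `M` be a finite monoid, `N` a submonoid, with `ℂ[M]` and `ℂ[N]` semisimple.  Let
`A = ℂ[M]` and `B = ℂ[N] ⊆ A`.  For every finite-dimensional `B`-module `W`, the induced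
module `A ⊗_B W` (realized as the quotient of `A ⊗_ℂ W` by the relations
`a·b ⊗ w = a ⊗ b·w` for `b ∈ B`) is isomorphic as an `A`-module to the coinduced module
`Hom_B(A, W)` with the action `(a·f)(x) = f(x·a)`. -/
theorem stmt3 {M : Type*} [Monoid M] [Finite M] (N : Submonoid M)
    (hM : IsSemisimpleRing (MonoidAlgebra ℂ M))
    (hN : IsSemisimpleRing (MonoidAlgebra ℂ ↥N))
    (B : Subalgebra ℂ (MonoidAlgebra ℂ M))
    (hB : ∀ x : MonoidAlgebra ℂ M,
      x ∈ B ↔ x ∈ Submodule.span ℂ ((⇑(MonoidAlgebra.of ℂ M)) '' (N : Set M)))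
    (W : Type*) [AddCommGroup W] [Module ℂ W] [Module ↥B W] [IsScalarTower ℂ ↥B W]
    [FiniteDimensional ℂ W]
    (J : Submodule (MonoidAlgebra ℂ M) ((MonoidAlgebra ℂ M) ⊗[ℂ] W))
    (hJ : J = Submodule.span (MonoidAlgebra ℂ M)
      {z : (MonoidAlgebra ℂ M) ⊗[ℂ] W |
        ∃ (a : MonoidAlgebra ℂ M) (b : ↥B) (w : W),
          z = (a * (b : MonoidAlgebra ℂ M)) ⊗ₜ[ℂ] w - a ⊗ₜ[ℂ] (b • w)}) :
    ∃ e : (((MonoidAlgebra ℂ M) ⊗[ℂ] W) ⧸ J) ≃+ ((MonoidAlgebra ℂ M) →ₗ[↥B] W),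
      ∀ (a : MonoidAlgebra ℂ M) (q : ((MonoidAlgebra ℂ M) ⊗[ℂ] W) ⧸ J)
        (x : MonoidAlgebra ℂ M), e (a • q) x = e q (x * a) := by
  have : IsSemisimpleRing B := isSemisimpleRing_of_toSubmodule_eq_span (Submodule.ext hB)
  obtain ⟨e⟩ := stmt3_general B W
  subst hJ
  exact ⟨e.toAddEquiv, fun a q x ↦ DFunLike.congr_fun (map_smul e a q) x⟩
end

section
/- Let M be a finite monoid and N a submonoid of M containing the identity. For every n ∈ N and m ∈ M: (1) N(nm)N = NmN if and only if N(nm) = Nm; (2) N(mn)N = NmN if and only if (mn)N = mN. -/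
/-!
If `m = a (n m) b` with `a, b ∈ N`, put `u = a n`, so that `m = u m b` and hence
`m = u ^ k m b ^ k` for every `k`. Finiteness provides `k` and `c ∈ N` with
`u ^ k = c u ^ (k + 1)`, and then `m = c u (u ^ k m b ^ k) = c u m` lies in `N (n m)`. The
right-hand version is dual. One-sided cosets are treated as double cosets with `⊥` on the other
side.
-/

open DoubleCoset

section PiRegular

variable {S : Type*} [Monoid S]

/-- Left π-regularity of `u`: the descending chain of left ideals `S u ^ k` becomes stationary.
It lets one deduce `m ∈ S u m` from `m = u m v`. -/
def IsLeftPiRegular (u : S) : Prop :=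
  ∃ (k : ℕ) (c : S), u ^ k = c * u ^ (k + 1)

/-- Right π-regularity of `u`: the descending chain of right ideals `u ^ k S` becomes stationary.
It lets one deduce `m ∈ m u S` from `m = v m u`. -/
def IsRightPiRegular (u : S) : Prop :=
  ∃ (k : ℕ) (c : S), u ^ k = u ^ (k + 1) * c

theorem exists_pow_eq_pow_add_succ_of_finite [Finite S] (u : S) :
    ∃ k d : ℕ, u ^ k = u ^ (k + 1 + d) := by
  obtain ⟨i, j, hij, hpow⟩ := Set.finite_univ.exists_lt_map_eq_of_forall_mem
    (f := fun k : ℕ => u ^ k) fun _ => Set.mem_univ _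
  obtain ⟨d, rfl⟩ := Nat.exists_eq_add_of_le (Nat.succ_le_of_lt hij)
  exact ⟨i, d, hpow⟩

theorem IsLeftPiRegular.of_finite [Finite S] (u : S) : IsLeftPiRegular u := by
  obtain ⟨k, d, hpow⟩ := exists_pow_eq_pow_add_succ_of_finite u
  exact ⟨k, u ^ d, by rw [← pow_add, add_comm d, ← hpow]⟩

theorem IsRightPiRegular.of_finite [Finite S] (u : S) : IsRightPiRegular u := by
  obtain ⟨k, d, hpow⟩ := exists_pow_eq_pow_add_succ_of_finite u
  exact ⟨k, u ^ d, by rw [← pow_add, ← hpow]⟩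

end PiRegular

section DoubleCosets

variable {M : Type*} [Monoid M] {H K : Submonoid M} {u v m n : M}

theorem pow_mul_mul_pow_eq_self (h : u * m * v = m) (k : ℕ) : u ^ k * m * v ^ k = m := by
  induction k with
  | zero => simp
  | succ k ih =>
    calc u ^ (k + 1) * m * v ^ (k + 1) = u ^ k * (u * m * v) * v ^ k := by
          simp only [pow_succ u, pow_succ' v, mul_assoc]
      _ = m := by rw [h, ih]

theorem IsLeftPiRegular.exists_mul_mul_eq_self {u : H} (hu : IsLeftPiRegular u)
    (h : u * m * v = m) : ∃ c ∈ H, c * u * m = m := by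
  obtain ⟨k, c, hc⟩ := hu
  have hc' : (u : M) ^ k = c * u ^ (k + 1) := mod_cast congrArg Subtype.val hc
  have hk := pow_mul_mul_pow_eq_self h k
  refine ⟨c, c.2, ?_⟩
  calc c * u * m = c * u * (u ^ k * m * v ^ k) := by rw [hk]
    _ = c * u ^ (k + 1) * m * v ^ k := by simp only [pow_succ', mul_assoc]
    _ = m := by rw [← hc', hk]

theorem IsRightPiRegular.exists_mul_mul_eq_self {v : K} (hv : IsRightPiRegular v)
    (h : u * m * v = m) : ∃ c ∈ K, m * v * c = m := by
  obtain ⟨k, c, hc⟩ := hv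
  have hc' : (v : M) ^ k = v ^ (k + 1) * c := mod_cast congrArg Subtype.val hc
  have hk := pow_mul_mul_pow_eq_self h k
  refine ⟨c, c.2, ?_⟩
  calc m * v * c = u ^ k * m * v ^ k * v * c := by rw [hk]
    _ = u ^ k * m * (v ^ (k + 1) * c) := by simp only [pow_succ, mul_assoc]
    _ = m := by rw [← hc', hk]

theorem mem_doubleCoset_submonoid_self (H K : Submonoid M) (m : M) : m ∈ doubleCoset m H K :=
  mem_doubleCoset.2 ⟨1, H.one_mem, 1, K.one_mem, by simp⟩

theorem doubleCoset_subset_of_mem (h : m ∈ doubleCoset n H K) :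
    doubleCoset m H K ⊆ doubleCoset n H K := by
  obtain ⟨a, ha, b, hb, rfl⟩ := mem_doubleCoset.1 h
  intro x hx
  obtain ⟨c, hc, d, hd, rfl⟩ := mem_doubleCoset.1 hx
  exact mem_doubleCoset.2 ⟨c * a, H.mul_mem hc ha, b * d, K.mul_mem hb hd,
    by simp only [mul_assoc]⟩

theorem doubleCoset_eq_iff_mem (h : n ∈ doubleCoset m H K) :
    doubleCoset n H K = doubleCoset m H K ↔ m ∈ doubleCoset n H K :=
  ⟨fun heq => heq ▸ mem_doubleCoset_submonoid_self H K m, fun hm =>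
    (doubleCoset_subset_of_mem h).antisymm (doubleCoset_subset_of_mem hm)⟩

theorem mul_mem_doubleCoset_of_mem_left (hn : n ∈ H) : n * m ∈ doubleCoset m H K :=
  mem_doubleCoset.2 ⟨n, hn, 1, K.one_mem, by simp⟩

theorem mul_mem_doubleCoset_of_mem_right (hn : n ∈ K) : m * n ∈ doubleCoset m H K :=
  mem_doubleCoset.2 ⟨1, H.one_mem, n, hn, by simp⟩

theorem doubleCoset_bot_right (H : Submonoid M) (m : M) :
    doubleCoset m H (⊥ : Submonoid M) = {x | ∃ a ∈ H, x = a * m} := by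
  ext x
  simp [mem_doubleCoset]

theorem doubleCoset_bot_left (K : Submonoid M) (m : M) :
    doubleCoset m (⊥ : Submonoid M) K = {x | ∃ b ∈ K, x = m * b} := by
  ext x
  simp [mem_doubleCoset]

theorem self_mem_doubleCoset_mul_left_iff (hH : ∀ u : H, IsLeftPiRegular u) (hn : n ∈ H) :
    m ∈ doubleCoset (n * m) H K ↔ m ∈ doubleCoset (n * m) H (⊥ : Submonoid M) := by
  simp only [doubleCoset_bot_right, Set.mem_ofPred_eq, mem_doubleCoset, SetLike.mem_coe]
  constructor
  · rintro ⟨a, ha, b, -, hab⟩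
    obtain ⟨c, hc, hcm⟩ := (hH ⟨a * n, H.mul_mem ha hn⟩).exists_mul_mul_eq_self
      (m := m) (v := b) (by simpa only [mul_assoc] using hab.symm)
    exact ⟨c * a, H.mul_mem hc ha, by simpa only [mul_assoc] using hcm.symm⟩
  · rintro ⟨a, ha, ham⟩
    exact ⟨a, ha, 1, K.one_mem, by rwa [mul_one]⟩

theorem self_mem_doubleCoset_mul_right_iff (hK : ∀ v : K, IsRightPiRegular v) (hn : n ∈ K) :
    m ∈ doubleCoset (m * n) H K ↔ m ∈ doubleCoset (m * n) (⊥ : Submonoid M) K := by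
  simp only [doubleCoset_bot_left, Set.mem_ofPred_eq, mem_doubleCoset, SetLike.mem_coe]
  constructor
  · rintro ⟨a, -, b, hb, hab⟩
    obtain ⟨c, hc, hcm⟩ := (hK ⟨n * b, K.mul_mem hn hb⟩).exists_mul_mul_eq_self
      (m := m) (u := a) (by simpa only [mul_assoc] using hab.symm)
    exact ⟨b * c, K.mul_mem hb hc, by simpa only [mul_assoc] using hcm.symm⟩
  · rintro ⟨b, hb, hbm⟩
    exact ⟨1, H.one_mem, b, hb, by rwa [one_mul]⟩

theorem doubleCoset_mul_left_eq_iff (hH : ∀ u : H, IsLeftPiRegular u) (hn : n ∈ H) :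
    doubleCoset (n * m) H K = doubleCoset m H K ↔
      doubleCoset (n * m) H (⊥ : Submonoid M) = doubleCoset m H (⊥ : Submonoid M) := by
  rw [doubleCoset_eq_iff_mem (mul_mem_doubleCoset_of_mem_left hn),
    doubleCoset_eq_iff_mem (mul_mem_doubleCoset_of_mem_left hn),
    self_mem_doubleCoset_mul_left_iff hH hn]

theorem doubleCoset_mul_right_eq_iff (hK : ∀ v : K, IsRightPiRegular v) (hn : n ∈ K) :
    doubleCoset (m * n) H K = doubleCoset m H K ↔
      doubleCoset (m * n) (⊥ : Submonoid M) K = doubleCoset m (⊥ : Submonoid M) K := by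
  rw [doubleCoset_eq_iff_mem (mul_mem_doubleCoset_of_mem_right hn),
    doubleCoset_eq_iff_mem (mul_mem_doubleCoset_of_mem_right hn),
    self_mem_doubleCoset_mul_right_iff hK hn]

theorem doubleCoset_eq_setOf (H K : Submonoid M) (m : M) :
    doubleCoset m H K = {x | ∃ a ∈ H, ∃ b ∈ K, x = a * m * b} :=
  Set.ext fun _ => mem_doubleCoset

end DoubleCosets

theorem stmt4_general {M : Type*} [Monoid M] (H K : Submonoid M)
    (hH : ∀ u : H, IsLeftPiRegular u) (hK : ∀ v : K, IsRightPiRegular v)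
    {n₁ n₂ : M} (hn₁ : n₁ ∈ H) (hn₂ : n₂ ∈ K) (m : M) :
    ({x : M | ∃ a ∈ H, ∃ b ∈ K, x = a * (n₁ * m) * b} =
        {x : M | ∃ a ∈ H, ∃ b ∈ K, x = a * m * b} ↔
      {x : M | ∃ a ∈ H, x = a * (n₁ * m)} = {x : M | ∃ a ∈ H, x = a * m}) ∧
    ({x : M | ∃ a ∈ H, ∃ b ∈ K, x = a * (m * n₂) * b} =
        {x : M | ∃ a ∈ H, ∃ b ∈ K, x = a * m * b} ↔
      {x : M | ∃ b ∈ K, x = (m * n₂) * b} = {x : M | ∃ b ∈ K, x = m * b}) := by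
  simp only [← doubleCoset_eq_setOf, ← doubleCoset_bot_right, ← doubleCoset_bot_left]
  exact ⟨doubleCoset_mul_left_eq_iff hH hn₁, doubleCoset_mul_right_eq_iff hK hn₂⟩

/-- Let `M` be a finite monoid and `N` a submonoid.  For `n ∈ N` and `m ∈ M`:
(1) `N(nm)N = NmN ↔ N(nm) = Nm`; (2) `N(mn)N = NmN ↔ (mn)N = mN`. -/
theorem stmt4 {M : Type*} [Monoid M] [Finite M] (N : Submonoid M)
    (n : M) (hn : n ∈ N) (m : M) :
    ({x : M | ∃ a ∈ N, ∃ b ∈ N, x = a * (n * m) * b} =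
        {x : M | ∃ a ∈ N, ∃ b ∈ N, x = a * m * b} ↔
      {x : M | ∃ a ∈ N, x = a * (n * m)} = {x : M | ∃ a ∈ N, x = a * m}) ∧
    ({x : M | ∃ a ∈ N, ∃ b ∈ N, x = a * (m * n) * b} =
        {x : M | ∃ a ∈ N, ∃ b ∈ N, x = a * m * b} ↔
      {x : M | ∃ b ∈ N, x = (m * n) * b} = {x : M | ∃ b ∈ N, x = m * b}) := by
  exact stmt4_general N N .of_finite .of_finite hn hn m
end

section
/- Let M be a finite monoid and N a submonoid of M containing the identity, and let m1, m2 ∈ M. If Nm1 = Nm2, then the sets m1N and m2N have the same cardinality; dually, if m1N = m2N, then the sets Nm1 and Nm2 have the same cardinality. -/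
/-!
If `N m₁ = N m₂`, then `1 ∈ N` gives `m₁ = c * m₂` and `m₂ = d * m₁` for some `c, d ∈ N`. By
associativity, left multiplication by `c` maps `m₂ N` onto `m₁ N`, and left multiplication by `d`
is its inverse there.
-/

open Cardinal

theorem bijOn_image_image_of_eqOn_comp {ι α β : Type*} {f : ι → α} {g : ι → β} {p : α → β}
    {q : β → α} {s : Set ι} (hp : Set.EqOn (p ∘ f) g s) (hq : Set.EqOn (q ∘ g) f s) :
    Set.BijOn p (f '' s) (g '' s) := by
  have apply_p : ∀ i ∈ s, p (f i) = g i := hp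
  have apply_q : ∀ i ∈ s, q (g i) = f i := hq
  refine Set.InvOn.bijOn (f' := q) ⟨?_, ?_⟩ ?_ ?_
  · rintro _ ⟨i, hi, rfl⟩
    rw [apply_p i hi, apply_q i hi]
  · rintro _ ⟨i, hi, rfl⟩
    rw [apply_q i hi, apply_p i hi]
  · rintro _ ⟨i, hi, rfl⟩
    exact ⟨i, hi, (apply_p i hi).symm⟩
  · rintro _ ⟨i, hi, rfl⟩
    exact ⟨i, hi, (apply_q i hi).symm⟩

section Semigroup

variable {M : Type*} [Semigroup M] {c d m₁ m₂ : M}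

theorem mk_image_mul_left_eq_of_mul_eq (h₁ : c * m₂ = m₁) (h₂ : d * m₁ = m₂) (T : Set M) :
    #((m₁ * ·) '' T) = #((m₂ * ·) '' T) := by
  have bijOn : Set.BijOn (d * ·) ((m₁ * ·) '' T) ((m₂ * ·) '' T) :=
    bijOn_image_image_of_eqOn_comp (q := (c * ·))
      (fun t _ ↦ by simp only [Function.comp_apply, ← mul_assoc, h₂])
      (fun t _ ↦ by simp only [Function.comp_apply, ← mul_assoc, h₁])
  exact mk_congr (bijOn.equiv _)

theorem mk_image_mul_right_eq_of_mul_eq (h₁ : m₂ * c = m₁) (h₂ : m₁ * d = m₂) (T : Set M) :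
    #((· * m₁) '' T) = #((· * m₂) '' T) := by
  have bijOn : Set.BijOn (· * d) ((· * m₁) '' T) ((· * m₂) '' T) :=
    bijOn_image_image_of_eqOn_comp (q := (· * c))
      (fun t _ ↦ by simp only [Function.comp_apply, mul_assoc, h₂])
      (fun t _ ↦ by simp only [Function.comp_apply, mul_assoc, h₁])
  exact mk_congr (bijOn.equiv _)

end Semigroup

section MulOneClass

variable {M : Type*} [MulOneClass M] {S : Set M} {m₁ m₂ : M}

theorem exists_mul_eq_of_image_mul_right_subset (one_mem : 1 ∈ S)
    (h : (· * m₁) '' S ⊆ (· * m₂) '' S) : ∃ c, c * m₂ = m₁ := by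
  obtain ⟨c, -, hc⟩ := h ⟨1, one_mem, one_mul m₁⟩
  exact ⟨c, hc⟩

theorem exists_mul_eq_of_image_mul_left_subset (one_mem : 1 ∈ S)
    (h : (m₁ * ·) '' S ⊆ (m₂ * ·) '' S) : ∃ c, m₂ * c = m₁ := by
  obtain ⟨c, -, hc⟩ := h ⟨1, one_mem, mul_one m₁⟩
  exact ⟨c, hc⟩

end MulOneClass

theorem stmt5_general {M : Type*} [Monoid M] {S : Set M} (one_mem : 1 ∈ S) (m₁ m₂ : M) :
    ((· * m₁) '' S = (· * m₂) '' S → #((m₁ * ·) '' S) = #((m₂ * ·) '' S)) ∧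
      ((m₁ * ·) '' S = (m₂ * ·) '' S → #((· * m₁) '' S) = #((· * m₂) '' S)) := by
  constructor
  · intro h
    obtain ⟨c, hc⟩ := exists_mul_eq_of_image_mul_right_subset one_mem h.subset
    obtain ⟨d, hd⟩ := exists_mul_eq_of_image_mul_right_subset one_mem h.superset
    exact mk_image_mul_left_eq_of_mul_eq hc hd S
  · intro h
    obtain ⟨c, hc⟩ := exists_mul_eq_of_image_mul_left_subset one_mem h.subset
    obtain ⟨d, hd⟩ := exists_mul_eq_of_image_mul_left_subset one_mem h.superset
    exact mk_image_mul_right_eq_of_mul_eq hc hd S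

/-- Let `M` be a finite monoid and `N` a submonoid.  If `Nm₁ = Nm₂` then `|m₁N| = |m₂N|`;
dually, if `m₁N = m₂N` then `|Nm₁| = |Nm₂|`. -/
theorem stmt5 {M : Type*} [Monoid M] [Finite M] (N : Submonoid M) (m1 m2 : M) :
    ({x : M | ∃ a ∈ N, x = a * m1} = {x : M | ∃ a ∈ N, x = a * m2} →
      {x : M | ∃ b ∈ N, x = m1 * b}.ncard = {x : M | ∃ b ∈ N, x = m2 * b}.ncard) ∧
    ({x : M | ∃ b ∈ N, x = m1 * b} = {x : M | ∃ b ∈ N, x = m2 * b} →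
      {x : M | ∃ a ∈ N, x = a * m1}.ncard = {x : M | ∃ a ∈ N, x = a * m2}.ncard) := by
  simp only [@eq_comm M _ (_ * _)]
  exact (stmt5_general N.one_mem m1 m2).imp (congrArg toNat ∘ ·) (congrArg toNat ∘ ·)
end

section
/- Let M be a finite monoid and N a submonoid of M containing the identity. Let n1, n2 ∈ N be regular elements of N, i.e. there exist x1, x2 ∈ N with n1 = n1*x1*n1 and n2 = n2*x2*n2. Then: (1) Nn1 = Nn2 if and only if Mn1 = Mn2; (2) n1N = n2N if and only if n1M = n2M. -/
/-!
If `n = n * x * n`, then `m` is a left multiple of `n` exactly when `m * x * n = m`. For regular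
`m` and `n` this turns `S m = S n` into a pair of equations that do not mention `S`, so the
equality holds either for all the semigroups `S` containing the elements involved or for none of
them. The statement about right multiples is the same one in the opposite semigroup.
-/

section Multiples

open MulOpposite

variable {M : Type*} [Semigroup M] {N S : Subsemigroup M} {m n x y : M}

/-- The set `S n` of left multiples of `n` by elements of `S`. In the absence of an identity it
need not contain `n`. -/
def leftMultiples (S : Subsemigroup M) (n : M) : Set M :=
  {y | ∃ a ∈ S, y = a * n}

/-- The set `n S` of right multiples of `n` by elements of `S`, dual to `leftMultiples`. -/
def rightMultiples (S : Subsemigroup M) (n : M) : Set M :=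
  {y | ∃ b ∈ S, y = n * b}

theorem leftMultiples_subset_iff (hm : m ∈ S) (hx : x ∈ S) (hy : y ∈ S)
    (hmy : m = m * y * m) (hnx : n = n * x * n) :
    leftMultiples S m ⊆ leftMultiples S n ↔ m * x * n = m := by
  constructor
  · intro hsub
    obtain ⟨a, -, hman⟩ : m ∈ leftMultiples S n := hsub ⟨m * y, mul_mem hm hy, hmy⟩
    calc m * x * n = a * (n * x * n) := by simp only [hman, mul_assoc]
      _ = m := by rw [← hnx, ← hman]
  · rintro hmxn _ ⟨a, ha, rfl⟩
    exact ⟨a * (m * x), mul_mem ha (mul_mem hm hx), by rw [mul_assoc, hmxn]⟩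

theorem leftMultiples_eq_iff (hm : m ∈ S) (hn : n ∈ S) (hx : x ∈ S) (hy : y ∈ S)
    (hmy : m = m * y * m) (hnx : n = n * x * n) :
    leftMultiples S m = leftMultiples S n ↔ m * x * n = m ∧ n * y * m = n := by
  rw [Set.Subset.antisymm_iff, leftMultiples_subset_iff hm hx hy hmy hnx,
    leftMultiples_subset_iff hn hy hx hnx hmy]

theorem leftMultiples_eq_iff_of_le (hNS : N ≤ S) (hm : m ∈ N) (hn : n ∈ N)
    (hm_reg : ∃ y ∈ N, m = m * y * m) (hn_reg : ∃ x ∈ N, n = n * x * n) :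
    leftMultiples N m = leftMultiples N n ↔ leftMultiples S m = leftMultiples S n := by
  obtain ⟨y, hy, hmy⟩ := hm_reg
  obtain ⟨x, hx, hnx⟩ := hn_reg
  rw [leftMultiples_eq_iff hm hn hx hy hmy hnx,
    leftMultiples_eq_iff (hNS hm) (hNS hn) (hNS hx) (hNS hy) hmy hnx]

theorem rightMultiples_eq_preimage_op (S : Subsemigroup M) (n : M) :
    rightMultiples S n = op ⁻¹' leftMultiples S.op (op n) := by
  ext y
  simp [leftMultiples, rightMultiples, MulOpposite.exists, ← op_mul]

theorem exists_eq_mul_mul_op (h : ∃ x ∈ N, n = n * x * n) :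
    ∃ x ∈ N.op, op n = op n * x * op n := by
  obtain ⟨x, hx, hnx⟩ := h
  exact ⟨op x, hx, by rw [← op_mul, ← op_mul, ← mul_assoc, ← hnx]⟩

theorem rightMultiples_eq_iff_of_le (hNS : N ≤ S) (hm : m ∈ N) (hn : n ∈ N)
    (hm_reg : ∃ y ∈ N, m = m * y * m) (hn_reg : ∃ x ∈ N, n = n * x * n) :
    rightMultiples N m = rightMultiples N n ↔ rightMultiples S m = rightMultiples S n := by
  simp only [rightMultiples_eq_preimage_op, Set.preimage_eq_preimage op_surjective]
  exact leftMultiples_eq_iff_of_le (Subsemigroup.op_le_op_iff.2 hNS) hm hn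
    (exists_eq_mul_mul_op hm_reg) (exists_eq_mul_mul_op hn_reg)

end Multiples

theorem stmt7_general {M : Type*} [Semigroup M] (N : Subsemigroup M)
    (n1 n2 : M) (hn1 : n1 ∈ N) (hn2 : n2 ∈ N)
    (hr1 : ∃ x ∈ N, n1 = n1 * x * n1) (hr2 : ∃ x ∈ N, n2 = n2 * x * n2) :
    ({y : M | ∃ a ∈ N, y = a * n1} = {y : M | ∃ a ∈ N, y = a * n2} ↔
      {y : M | ∃ a : M, y = a * n1} = {y : M | ∃ a : M, y = a * n2}) ∧
    ({y : M | ∃ b ∈ N, y = n1 * b} = {y : M | ∃ b ∈ N, y = n2 * b} ↔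
      {y : M | ∃ b : M, y = n1 * b} = {y : M | ∃ b : M, y = n2 * b}) := by
  have hleft := leftMultiples_eq_iff_of_le le_top hn1 hn2 hr1 hr2
  have hright := rightMultiples_eq_iff_of_le le_top hn1 hn2 hr1 hr2
  simp only [leftMultiples, rightMultiples, Subsemigroup.mem_top, true_and] at hleft hright
  exact ⟨hleft, hright⟩

/-- Let `M` be a finite monoid, `N` a submonoid, and `n₁, n₂ ∈ N` regular elements of `N`.
Then `Nn₁ = Nn₂ ↔ Mn₁ = Mn₂` and `n₁N = n₂N ↔ n₁M = n₂M`. -/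
theorem stmt7 {M : Type*} [Monoid M] [Finite M] (N : Submonoid M)
    (n1 n2 : M) (hn1 : n1 ∈ N) (hn2 : n2 ∈ N)
    (hr1 : ∃ x ∈ N, n1 = n1 * x * n1) (hr2 : ∃ x ∈ N, n2 = n2 * x * n2) :
    ({y : M | ∃ a ∈ N, y = a * n1} = {y : M | ∃ a ∈ N, y = a * n2} ↔
      {y : M | ∃ a : M, y = a * n1} = {y : M | ∃ a : M, y = a * n2}) ∧
    ({y : M | ∃ b ∈ N, y = n1 * b} = {y : M | ∃ b ∈ N, y = n2 * b} ↔
      {y : M | ∃ b : M, y = n1 * b} = {y : M | ∃ b : M, y = n2 * b}) :=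
  stmt7_general N.toSubsemigroup n1 n2 hn1 hn2 hr1 hr2
end

section
/- Let M be a finite monoid and let N and K be submonoids of M containing the identity. If m, m' ∈ M satisfy NmK = Nm'K, then the sets Nm and Nm' have the same cardinality, and the sets mK and m'K have the same cardinality. -/
/-!
If `m' = a * m * b` with `a ∈ N` and `b ∈ K`, then `N m' = (N a) m b ⊆ (N m) b`, so right
multiplication by `b` shows that `N m'` is at most as large as `N m`. The hypothesis `NmK = Nm'K`
gives such an expression in both directions, and the Cantor–Bernstein theorem gives equality, for
infinite sets too. The same argument for the right action of `K` gives the statement on `mK`.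
-/

open Cardinal MulAction
open scoped Pointwise

section CommutingActions

variable {N K X : Type*} [Monoid N] [MulAction N X] [SMul K X] [SMulCommClass N K X]

theorem orbit_smul_smul_subset (n : N) (k : K) (x : X) :
    orbit N (n • k • x) ⊆ k • orbit N x := by
  rintro _ ⟨c, rfl⟩
  refine ⟨(c * n) • x, mem_orbit x (c * n), ?_⟩
  change k • (c * n) • x = c • n • k • x
  rw [← smul_comm, mul_smul]

theorem mk_orbit_smul_smul_le (n : N) (k : K) (x : X) : #(orbit N (n • k • x)) ≤ #(orbit N x) :=
  (mk_le_mk_of_subset (orbit_smul_smul_subset n k x)).trans mk_image_le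

theorem mk_orbit_eq_of_eq_smul_smul {n n' : N} {k k' : K} {x y : X}
    (hx : x = n • k • y) (hy : y = n' • k' • x) : #(orbit N x) = #(orbit N y) :=
  le_antisymm (hx ▸ mk_orbit_smul_smul_le n k y) (hy ▸ mk_orbit_smul_smul_le n' k' x)

end CommutingActions

section Submonoids

variable {M : Type*} [Monoid M]

theorem orbit_submonoid_eq_setOf (N : Submonoid M) (m : M) :
    orbit N m = {x : M | ∃ a ∈ N, x = a * m} := by
  ext x
  simp [mem_orbit_iff, Submonoid.smul_def, eq_comm]

theorem orbit_submonoid_op_eq_setOf (K : Submonoid M) (m : M) :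
    orbit K.op m = {x : M | ∃ b ∈ K, x = m * b} := by
  ext x
  simp [mem_orbit_iff, Submonoid.smul_def, eq_comm]

theorem mem_setOf_mul_mul (N K : Submonoid M) (m : M) :
    m ∈ {x : M | ∃ a ∈ N, ∃ b ∈ K, x = a * m * b} :=
  ⟨1, N.one_mem, 1, K.one_mem, by simp⟩

theorem stmt8_general (N K : Submonoid M) (m m' : M)
    (h : {x : M | ∃ a ∈ N, ∃ b ∈ K, x = a * m * b} =
         {x : M | ∃ a ∈ N, ∃ b ∈ K, x = a * m' * b}) :
    #{x : M | ∃ a ∈ N, x = a * m} = #{x : M | ∃ a ∈ N, x = a * m'} ∧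
    #{x : M | ∃ b ∈ K, x = m * b} = #{x : M | ∃ b ∈ K, x = m' * b} := by
  obtain ⟨a, ha, b, hb, hm⟩ := h.subset (mem_setOf_mul_mul N K m)
  obtain ⟨a', ha', b', hb', hm'⟩ := h.superset (mem_setOf_mul_mul N K m')
  let α : N := ⟨a, ha⟩
  let α' : N := ⟨a', ha'⟩
  let β : K.op := ⟨.op b, hb⟩
  let β' : K.op := ⟨.op b', hb'⟩
  have hm_left : m = α • β • m' := hm.trans (mul_assoc a m' b)
  have hm'_left : m' = α' • β' • m := hm'.trans (mul_assoc a' m b')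
  have hm_right : m = β • α • m' := hm
  have hm'_right : m' = β' • α' • m := hm'
  simp only [← orbit_submonoid_eq_setOf, ← orbit_submonoid_op_eq_setOf]
  exact ⟨mk_orbit_eq_of_eq_smul_smul hm_left hm'_left,
    mk_orbit_eq_of_eq_smul_smul hm_right hm'_right⟩

end Submonoids

/-- Let `M` be a finite monoid and `N, K` submonoids.  If `NmK = Nm'K` then
`|Nm| = |Nm'|` and `|mK| = |m'K|`. -/
theorem stmt8 {M : Type*} [Monoid M] [Finite M] (N K : Submonoid M) (m m' : M)
    (h : {x : M | ∃ a ∈ N, ∃ b ∈ K, x = a * m * b} =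
         {x : M | ∃ a ∈ N, ∃ b ∈ K, x = a * m' * b}) :
    {x : M | ∃ a ∈ N, x = a * m}.ncard = {x : M | ∃ a ∈ N, x = a * m'}.ncard ∧
    {x : M | ∃ b ∈ K, x = m * b}.ncard = {x : M | ∃ b ∈ K, x = m' * b}.ncard :=
  (stmt8_general N K m m' h).imp (congrArg toNat) (congrArg toNat)
end

section
/- Let M be a finite monoid, let N and K be submonoids of M containing the identity, and let m ∈ M. Define L = {x ∈ M : Nx = Nm}, R = {x ∈ M : xK = mK}, H = L ∩ R, and J = {x ∈ M : NxK = NmK}. Then |J| · |H| = |L| · |R| (in particular H is nonempty, since m ∈ H). -/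
/-!
Left multiplication by `N` and right multiplication by `K` are commuting actions on `M`, and `NxK`
is the orbit of `x` under the product action of `N × K`. So let `N` and `K` act on a set `X`, with
commuting actions, and suppose that the `N × K`-class `J` of `x` is finite. By pigeonhole, an
element of the `N`-orbit of `x` that lies in `J` already lies in the `N`-class `L` of `x`; likewise
for `K`. Consequently every `K`-class in `J` meets `L`, at a point `a • x` say, and translation by
`a` matches the `K`-class `R` of `x` with the `K`-class of `a • x` while preserving `N`-classes.
Hence if `J` consists of `q` classes of `K`, then `|J| = q |R|` and `|L| = q |L ∩ R|`.
-/

open MulAction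

theorem ncard_eq_ncard_image_mul_of_ncard_fiber_eq {α β : Type*} {f : α → β} {s : Set α}
    (hs : s.Finite) {c : ℕ} (hc : ∀ y ∈ s, {z ∈ s | f z = f y}.ncard = c) :
    s.ncard = (f '' s).ncard * c := by
  classical
  lift s to Finset α using hs
  rw [← Finset.coe_image, Set.ncard_coe_finset, Set.ncard_coe_finset,
    Finset.card_eq_sum_card_image f s]
  refine Finset.sum_const_nat (Finset.forall_mem_image.2 fun y hy => ?_)
  rw [← hc y hy, ← Set.ncard_coe_finset, Finset.coe_filter]
  simp only [Finset.mem_coe]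

section Orbit

variable {N X : Type*} [Monoid N] [MulAction N X] {x y : X}

/-- The elements of `X` generating the same `N`-orbit as `x`. For `N` acting on a monoid by left
multiplication this is Green's `𝓛`-class of `x` relative to `N`, for right multiplication it is the
`𝓡`-class. Orbits of a monoid action may overlap, so this is in general smaller than `orbit N x`. -/
def orbitClass (N : Type*) {X : Type*} [Monoid N] [MulAction N X] (x : X) : Set X :=
  {y | orbit N y = orbit N x}

theorem orbit_subset_orbit_iff : orbit N x ⊆ orbit N y ↔ x ∈ orbit N y := by
  refine ⟨fun h => h (mem_orbit_self x), ?_⟩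
  rintro ⟨a, rfl⟩
  exact orbit_smul_subset a y

theorem mem_orbitClass_iff : y ∈ orbitClass N x ↔ y ∈ orbit N x ∧ x ∈ orbit N y := by
  rw [← orbit_subset_orbit_iff, ← orbit_subset_orbit_iff]
  exact Set.Subset.antisymm_iff

theorem orbitClass_eq_of_mem (h : y ∈ orbitClass N x) : orbitClass N y = orbitClass N x :=
  Set.ext fun _ => Eq.congr_right h

end Orbit

attribute [local instance] MulAction.prodOfSMulCommClass

section CommutingActions

variable {N K X : Type*} [Monoid N] [Monoid K] [MulAction N X] [MulAction K X]
  [SMulCommClass N K X] {x y z : X}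

theorem orbit_subset_orbit_prod_left : orbit N x ⊆ orbit (N × K) x := by
  rintro _ ⟨a, rfl⟩
  exact ⟨(a, 1), congrArg (a • ·) (one_smul K x)⟩

theorem orbit_prod_swap [SMulCommClass K N X] : orbit (K × N) x = orbit (N × K) x := by
  ext y
  constructor
  · rintro ⟨⟨b, a⟩, rfl⟩
    exact ⟨(a, b), smul_comm a b x⟩
  · rintro ⟨⟨a, b⟩, rfl⟩
    exact ⟨(b, a), smul_comm b a x⟩

theorem orbitClass_prod_swap [SMulCommClass K N X] :
    orbitClass (K × N) x = orbitClass (N × K) x := by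
  ext y
  exact Eq.congr orbit_prod_swap orbit_prod_swap

theorem orbit_subset_orbit_prod_right : orbit K x ⊆ orbit (N × K) x := by
  have := SMulCommClass.symm N K X
  rw [← orbit_prod_swap]
  exact orbit_subset_orbit_prod_left

theorem orbitClass_subset_orbitClass_prod_left : orbitClass N x ⊆ orbitClass (N × K) x := by
  intro y hy
  rw [mem_orbitClass_iff] at hy ⊢
  exact hy.imp (orbit_subset_orbit_prod_left ·) (orbit_subset_orbit_prod_left ·)

theorem orbitClass_subset_orbitClass_prod_right : orbitClass K x ⊆ orbitClass (N × K) x := by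
  have := SMulCommClass.symm N K X
  rw [← orbitClass_prod_swap]
  exact orbitClass_subset_orbitClass_prod_left

theorem orbit_smul_eq_image (a : N) (x : X) : orbit K (a • x) = (a • ·) '' orbit K x := by
  simp only [orbit, ← Set.range_comp, Function.comp_def, smul_comm a]

theorem smul_mem_orbitClass_smul (a : N) (h : y ∈ orbitClass K x) :
    a • y ∈ orbitClass K (a • x) :=
  (orbit_smul_eq_image a y).trans
    ((congrArg ((a • ·) '' ·) h).trans (orbit_smul_eq_image a x).symm)

theorem smul_eq_self_of_mem_orbit {a : N} (hx : a • x = x) (hy : y ∈ orbit K x) : a • y = y := by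
  obtain ⟨b, rfl⟩ := hy
  exact (smul_comm a b x).trans (congrArg (b • ·) hx)

theorem pow_smul_pow_smul_eq_self {a : N} {b : K} (h : a • b • x = x) (n : ℕ) :
    a ^ n • b ^ n • x = x :=
  pow_mem (S := stabilizerSubmonoid (N × K) x) (x := (a, b)) h n

theorem pow_smul_mem_orbitClass_prod {a : N} {b : K} (h : a • b • x = x) (n : ℕ) :
    a ^ n • x ∈ orbitClass (N × K) x :=
  mem_orbitClass_iff.2 ⟨orbit_subset_orbit_prod_left (mem_orbit x (a ^ n)),
    orbit_subset_orbit_prod_right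
      ⟨b ^ n, (smul_comm (a ^ n) (b ^ n) x).symm.trans (pow_smul_pow_smul_eq_self h n)⟩⟩

theorem exists_pow_succ_smul_eq_self (hfin : (orbitClass (N × K) x).Finite) {a : N} {b : K}
    (h : a • b • x = x) : ∃ n : ℕ, a ^ (n + 1) • x = x := by
  obtain ⟨i, j, hij, hpow⟩ :=
    hfin.exists_lt_map_eq_of_forall_mem (pow_smul_mem_orbitClass_prod h)
  obtain ⟨n, rfl⟩ := Nat.exists_eq_add_of_lt hij
  refine ⟨n, ?_⟩
  calc a ^ (n + 1) • x
      = a ^ (n + 1) • a ^ i • b ^ i • x := by rw [pow_smul_pow_smul_eq_self h]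
    _ = b ^ i • a ^ (i + n + 1) • x := by
        rw [smul_smul, ← pow_add, smul_comm, add_comm (n + 1), add_assoc]
    _ = a ^ i • b ^ i • x := by rw [← hpow, ← smul_comm]
    _ = x := pow_smul_pow_smul_eq_self h i

theorem mem_orbitClass_left_of_mem_orbit (hfin : (orbitClass (N × K) x).Finite)
    (hy : y ∈ orbit N x) (hyJ : y ∈ orbitClass (N × K) x) : y ∈ orbitClass N x := by
  obtain ⟨a, rfl⟩ := hy
  obtain ⟨⟨c, d⟩, hcd : c • d • a • x = x⟩ := (mem_orbitClass_iff.1 hyJ).2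
  have hca : (c * a) • d • x = x := by rw [mul_smul, smul_comm a, hcd]
  obtain ⟨n, hn⟩ := exists_pow_succ_smul_eq_self hfin hca
  refine mem_orbitClass_iff.2 ⟨mem_orbit x a, (c * a) ^ n * c, ?_⟩
  change ((c * a) ^ n * c) • a • x = x
  rwa [smul_smul, mul_assoc, ← pow_succ]

theorem mem_orbitClass_right_of_mem_orbit (hfin : (orbitClass (N × K) x).Finite)
    (hy : y ∈ orbit K x) (hyJ : y ∈ orbitClass (N × K) x) : y ∈ orbitClass K x := by
  have := SMulCommClass.symm N K X
  rw [← orbitClass_prod_swap] at hfin hyJ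
  exact mem_orbitClass_left_of_mem_orbit hfin hy hyJ

theorem exists_mem_orbitClass_left_mem_orbitClass_right (hfin : (orbitClass (N × K) x).Finite)
    (hy : y ∈ orbitClass (N × K) x) : ∃ z ∈ orbitClass N x, y ∈ orbitClass K z := by
  obtain ⟨⟨⟨a, b⟩, hab : a • b • x = y⟩, hxy⟩ := mem_orbitClass_iff.1 hy
  have hyz : y ∈ orbit K (a • x) := ⟨b, (smul_comm a b x).symm.trans hab⟩
  have hzJ : a • x ∈ orbitClass (N × K) x :=
    mem_orbitClass_iff.2 ⟨orbit_subset_orbit_prod_left (mem_orbit x a),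
      orbit_subset_orbit_iff.2 (orbit_subset_orbit_prod_right hyz) hxy⟩
  have hJz := orbitClass_eq_of_mem hzJ
  exact ⟨a • x, mem_orbitClass_left_of_mem_orbit hfin (mem_orbit x a) hzJ,
    mem_orbitClass_right_of_mem_orbit (hJz ▸ hfin) hyz (hJz ▸ hy)⟩

theorem bijOn_smul_orbitClass {a a' : N} (h : a' • a • x = x) :
    Set.BijOn (a • ·) (orbitClass K x) (orbitClass K (a • x)) := by
  have left_fix : (a' * a) • x = x := (mul_smul a' a x).trans h
  have right_fix : (a * a') • a • x = a • x := by rw [mul_smul, h]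
  refine Set.InvOn.bijOn (f' := (a' • ·)) ⟨fun r hr => ?_, fun r hr => ?_⟩
    (fun r hr => smul_mem_orbitClass_smul a hr)
    (fun r hr => by simpa only [h] using smul_mem_orbitClass_smul a' hr)
  · exact (mul_smul a' a r).symm.trans
      (smul_eq_self_of_mem_orbit left_fix (mem_orbitClass_iff.1 hr).1)
  · exact (mul_smul a a' r).symm.trans
      (smul_eq_self_of_mem_orbit right_fix (mem_orbitClass_iff.1 hr).1)

theorem orbit_smul_eq_of_mem_orbit {a a' : N} (h : a' • a • x = x) (hy : y ∈ orbit K x) :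
    orbit N (a • y) = orbit N y := by
  have hfix : (a' * a) • y = y := smul_eq_self_of_mem_orbit ((mul_smul a' a x).trans h) hy
  exact mem_orbitClass_iff.2 ⟨mem_orbit y a, a', (mul_smul a' a y).symm.trans hfix⟩

theorem bijOn_smul_orbitClass_inter {a a' : N} (h : a' • a • x = x) (w : X) :
    Set.BijOn (a • ·) (orbitClass N w ∩ orbitClass K x)
      (orbitClass N w ∩ orbitClass K (a • x)) := by
  have hpre : orbitClass K x ∩ (a • ·) ⁻¹' (orbitClass N w ∩ orbitClass K (a • x)) =
      orbitClass N w ∩ orbitClass K x := by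
    ext r
    have hL (hr : r ∈ orbitClass K x) : a • r ∈ orbitClass N w ↔ r ∈ orbitClass N w :=
      Eq.congr_left (orbit_smul_eq_of_mem_orbit h (mem_orbitClass_iff.1 hr).1)
    exact ⟨fun ⟨hr, hw, _⟩ => ⟨(hL hr).1 hw, hr⟩,
      fun ⟨hw, hr⟩ => ⟨hr, (hL hr).2 hw, smul_mem_orbitClass_smul a hr⟩⟩
  exact hpre ▸ (bijOn_smul_orbitClass h).subset_right Set.inter_subset_right

theorem ncard_orbitClass_right_eq (hz : z ∈ orbitClass N x) :
    (orbitClass K z).ncard = (orbitClass K x).ncard := by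
  obtain ⟨⟨a, rfl⟩, a', ha'⟩ := mem_orbitClass_iff.1 hz
  have hbij := bijOn_smul_orbitClass (K := K) ha'
  rw [← hbij.injOn.ncard_image, hbij.image_eq]

theorem ncard_orbitClass_inter_eq (hz : z ∈ orbitClass N x) :
    (orbitClass N x ∩ orbitClass K z).ncard = (orbitClass N x ∩ orbitClass K x).ncard := by
  obtain ⟨⟨a, rfl⟩, a', ha'⟩ := mem_orbitClass_iff.1 hz
  have hbij := bijOn_smul_orbitClass_inter (K := K) ha' x
  rw [← hbij.injOn.ncard_image, hbij.image_eq]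

theorem image_orbit_orbitClass_prod (hfin : (orbitClass (N × K) x).Finite) :
    orbit K '' orbitClass (N × K) x = orbit K '' orbitClass N x := by
  refine Set.Subset.antisymm ?_ (Set.image_mono orbitClass_subset_orbitClass_prod_left)
  rintro _ ⟨y, hy, rfl⟩
  obtain ⟨z, hz, hyz⟩ := exists_mem_orbitClass_left_mem_orbitClass_right hfin hy
  exact ⟨z, hz, hyz.symm⟩

theorem ncard_orbitClass_prod (hfin : (orbitClass (N × K) x).Finite) :
    (orbitClass (N × K) x).ncard = (orbit K '' orbitClass N x).ncard * (orbitClass K x).ncard := by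
  rw [← image_orbit_orbitClass_prod hfin]
  refine ncard_eq_ncard_image_mul_of_ncard_fiber_eq hfin fun y hy => ?_
  obtain ⟨z, hz, hyz⟩ := exists_mem_orbitClass_left_mem_orbitClass_right hfin hy
  have hfiber : {w ∈ orbitClass (N × K) x | orbit K w = orbit K y} = orbitClass K y :=
    Set.inter_eq_right.2 (orbitClass_eq_of_mem hy ▸ orbitClass_subset_orbitClass_prod_right)
  rw [hfiber, orbitClass_eq_of_mem hyz, ncard_orbitClass_right_eq hz]

theorem ncard_orbitClass_left (hfin : (orbitClass N x).Finite) :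
    (orbitClass N x).ncard =
      (orbit K '' orbitClass N x).ncard * (orbitClass N x ∩ orbitClass K x).ncard :=
  ncard_eq_ncard_image_mul_of_ncard_fiber_eq hfin fun _ hz => ncard_orbitClass_inter_eq hz

theorem stmt10_general (hfin : (orbitClass (N × K) x).Finite) :
    (orbitClass (N × K) x).ncard * (orbitClass N x ∩ orbitClass K x).ncard =
      (orbitClass N x).ncard * (orbitClass K x).ncard := by
  rw [ncard_orbitClass_prod hfin,
    ncard_orbitClass_left (K := K) (hfin.subset orbitClass_subset_orbitClass_prod_left),
    mul_right_comm]

end CommutingActions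

section Multiplication

variable {M : Type*} [Monoid M]

theorem orbit_submonoid_eq (N : Submonoid M) (x : M) :
    orbit N x = {y | ∃ a ∈ N, y = a * x} := by
  ext y
  simp [mem_orbit_iff, Submonoid.smul_def, eq_comm]

theorem orbit_submonoid_op_eq (K : Submonoid M) (x : M) :
    orbit K.op x = {y | ∃ b ∈ K, y = x * b} := by
  ext y
  simp [mem_orbit_iff, Submonoid.smul_def, eq_comm, MulOpposite.exists]

theorem orbit_submonoid_prod_op_eq (N K : Submonoid M) (x : M) :
    orbit (N × K.op) x = {y | ∃ a ∈ N, ∃ b ∈ K, y = a * x * b} := by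
  ext y
  constructor
  · rintro ⟨⟨⟨a, ha⟩, ⟨b, hb⟩⟩, rfl⟩
    exact ⟨a, ha, b.unop, hb, (mul_assoc a x b.unop).symm⟩
  · rintro ⟨a, ha, b, hb, rfl⟩
    exact ⟨(⟨a, ha⟩, ⟨.op b, hb⟩), (mul_assoc a x b).symm⟩

end Multiplication

/-- Let `M` be a finite monoid, `N, K` submonoids and `m ∈ M`.  With
`L = {x : Nx = Nm}`, `R = {x : xK = mK}`, `H = L ∩ R` and `J = {x : NxK = NmK}`,
we have `|J|·|H| = |L|·|R|`. -/
theorem stmt10 {M : Type*} [Monoid M] [Finite M] (N K : Submonoid M) (m : M)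
    (L R J : Set M)
    (hL : L = {x : M | {y : M | ∃ a ∈ N, y = a * x} = {y : M | ∃ a ∈ N, y = a * m}})
    (hR : R = {x : M | {y : M | ∃ b ∈ K, y = x * b} = {y : M | ∃ b ∈ K, y = m * b}})
    (hJ : J = {x : M | {y : M | ∃ a ∈ N, ∃ b ∈ K, y = a * x * b} =
                        {y : M | ∃ a ∈ N, ∃ b ∈ K, y = a * m * b}}) :
    J.ncard * (L ∩ R).ncard = L.ncard * R.ncard := by
  simp only [← orbit_submonoid_eq, ← orbit_submonoid_op_eq, ← orbit_submonoid_prod_op_eq]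
    at hL hR hJ
  subst hL hR hJ
  exact stmt10_general (N := N) (K := K.op) (Set.toFinite _)
end

section
/- Let N be a finite monoid such that aN = Na (as subsets of N) for every a ∈ N, and suppose the complex monoid algebra ℂ[N] is a semisimple ring. Let e ∈ N be an idempotent and set G_e = {x ∈ N : Nx = Ne}. Then {n ∈ N : e*n ∈ G_e} = {n ∈ N : n*e ∈ G_e}. -/
/-! An idempotent `e` with `eN = Ne` is central: `e * n` and `n * e` lie in both `eN` and `Ne`, so
they are fixed by multiplication by `e` on either side, and both equal `e * n * e`. -/

section Semigroup

variable {N : Type*} [Semigroup N] {e : N}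

theorem mem_center_of_isIdempotentElem_of_left_eq_right (he : IsIdempotentElem e)
    (heN : {y : N | ∃ x : N, y = e * x} = {y : N | ∃ x : N, y = x * e}) :
    e ∈ Set.center N := by
  refine Semigroup.mem_center_iff.mpr fun n ↦ ?_
  obtain ⟨l, hl⟩ : ∃ l, e * n = l * e := heN.subset ⟨n, rfl⟩
  obtain ⟨r, hr⟩ : ∃ r, n * e = e * r := heN.superset ⟨n, rfl⟩
  calc n * e = e * (n * e) := by rw [hr, he.mul_self_mul]
    _ = e * n * e := (mul_assoc e n e).symm
    _ = e * n := by rw [hl, he.mul_mul_self]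

theorem stmt11_general (he : IsIdempotentElem e)
    (heN : {y : N | ∃ x : N, y = e * x} = {y : N | ∃ x : N, y = x * e})
    {Ge : Set N}
    (hGe : Ge = {x : N | {y : N | ∃ a : N, y = a * x} = {y : N | ∃ a : N, y = a * e}}) :
    {n : N | e * n ∈ Ge} = {n : N | n * e ∈ Ge} := by
  have he_center := mem_center_of_isIdempotentElem_of_left_eq_right he heN
  subst hGe
  ext n
  simp only [Set.mem_ofPred_eq, Semigroup.mem_center_iff.mp he_center n]

end Semigroup

/-- Let `N` be a finite monoid with `aN = Na` for all `a`, whose complex monoid algebra is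
semisimple.  For an idempotent `e` with `G_e = {x : Nx = Ne}`, one has
`{n : e*n ∈ G_e} = {n : n*e ∈ G_e}`. -/
theorem stmt11 {N : Type*} [Monoid N] [Finite N]
    (hcentric : ∀ a : N, {y : N | ∃ x : N, y = a * x} = {y : N | ∃ x : N, y = x * a})
    (hss : IsSemisimpleRing (MonoidAlgebra ℂ N))
    (e : N) (he : e * e = e)
    (Ge : Set N)
    (hGe : Ge = {x : N | {y : N | ∃ a : N, y = a * x} = {y : N | ∃ a : N, y = a * e}}) :
    {n : N | e * n ∈ Ge} = {n : N | n * e ∈ Ge} :=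
  stmt11_general he (hcentric e) hGe
end

section
/- Let M be a finite monoid and N a centric submonoid of M, and let M/N be the quotient of M by the monoid congruence x ~ y ⟺ Nx = Ny. If M/N is a group (i.e. every element of M/N is invertible), then M is a group (i.e. every element of M is invertible). -/
/-!
If `y` inverts `x` modulo `N` on the left, then `N(yx) = N` contains `1`, so some `ny` with `n ∈ N`
is a genuine left inverse of `x`. A monoid in which every element has a left inverse is a group.
-/

section

variable {M : Type*} [Monoid M]

theorem isUnit_of_forall_exists_left_inv (h : ∀ a : M, ∃ b, b * a = 1) (a : M) : IsUnit a := by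
  obtain ⟨b, hba⟩ := h a
  obtain ⟨d, hdb⟩ := h b
  have hda : d = a := left_inv_eq_right_inv hdb hba
  exact ⟨⟨a, b, hda ▸ hdb, hba⟩, rfl⟩

theorem exists_left_inv_of_con_quotient {c : Con M} (hc : ∀ x, c x 1 → ∃ y, y * x = 1) {m : M}
    (hm : ∃ q : c.Quotient, q * m = 1) : ∃ b, b * m = 1 := by
  obtain ⟨q, hq⟩ := hm
  obtain ⟨y, rfl⟩ := c.mk'_surjective q
  have hym : c (y * m) 1 := c.eq.mp hq
  obtain ⟨n, hn⟩ := hc _ hym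
  exact ⟨n * y, by rw [mul_assoc, hn]⟩

theorem exists_mem_mul_eq_one_of_setOf_mul_eq {N : Submonoid M} {x : M}
    (h : {z : M | ∃ n ∈ N, z = n * x} = {z : M | ∃ n ∈ N, z = n * 1}) :
    ∃ n ∈ N, n * x = 1 := by
  have one_mem : (1 : M) ∈ {z : M | ∃ n ∈ N, z = n * x} :=
    h ▸ ⟨1, N.one_mem, (mul_one 1).symm⟩
  obtain ⟨n, hnN, hn⟩ := one_mem
  exact ⟨n, hnN, hn.symm⟩

theorem stmt13_general (N : Submonoid M) (c : Con M)
    (hc : ∀ x y : M, c x y ↔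
      {z : M | ∃ n ∈ N, z = n * x} = {z : M | ∃ n ∈ N, z = n * y})
    (hgrp : ∀ q : c.Quotient, IsUnit q) (m : M) : IsUnit m := by
  have left_inv_of_con_one (x : M) (hx : c x 1) : ∃ y, y * x = 1 := by
    obtain ⟨n, -, hn⟩ := exists_mem_mul_eq_one_of_setOf_mul_eq ((hc x 1).mp hx)
    exact ⟨n, hn⟩
  exact isUnit_of_forall_exists_left_inv
    (fun a ↦ exists_left_inv_of_con_quotient left_inv_of_con_one (hgrp a).exists_left_inv) m

end

/-- Let `M` be a finite monoid, `N` a centric submonoid, and `c` the monoid congruence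
`x ~ y ↔ Nx = Ny`.  If the quotient monoid `M/N` is a group, then `M` is a group. -/
theorem stmt13 {M : Type*} [Monoid M] [Finite M] (N : Submonoid M)
    (hcentric : ∀ m : M, {x : M | ∃ n ∈ N, x = n * m} = {x : M | ∃ n ∈ N, x = m * n})
    (c : Con M)
    (hc : ∀ x y : M, c x y ↔
      {z : M | ∃ n ∈ N, z = n * x} = {z : M | ∃ n ∈ N, z = n * y})
    (hgrp : ∀ q : c.Quotient, IsUnit q) :
    ∀ m : M, IsUnit m :=
  stmt13_general N c hc hgrp
end

section
/- Let N be a monoid such that aN = Na (as subsets of N) for every a ∈ N. Then any two idempotents of N commute: if e, f ∈ N satisfy e*e = e and f*f = f, then e*f = f*e. -/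
theorem stmt14_general {S : Type*} [Semigroup S] {e : S} (he : IsIdempotentElem e)
    (hcentric : {y : S | ∃ x : S, y = e * x} = {y : S | ∃ x : S, y = x * e}) (f : S) :
    e * f = f * e := by
  have mul_right_fixed : e * f * e = e * f := by
    obtain ⟨x, hx⟩ : ∃ x, e * f = x * e := hcentric.subset ⟨f, rfl⟩
    rw [hx, he.mul_mul_self]
  have mul_left_fixed : e * (f * e) = f * e := by
    obtain ⟨x, hx⟩ : ∃ x, f * e = e * x := hcentric.superset ⟨f, rfl⟩
    rw [hx, he.mul_self_mul]
  calc
    e * f = e * f * e := mul_right_fixed.symm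
    _ = e * (f * e) := mul_assoc e f e
    _ = f * e := mul_left_fixed

/-- In a monoid `N` with `aN = Na` for every `a`, any two idempotents commute. -/
theorem stmt14 {N : Type*} [Monoid N]
    (hcentric : ∀ a : N, {y : N | ∃ x : N, y = a * x} = {y : N | ∃ x : N, y = x * a})
    (e f : N) (he : e * e = e) (hf : f * f = f) :
    e * f = f * e :=
  stmt14_general he (hcentric e) f
end

section
/- Let M be a finite monoid and N a centric submonoid of M. Then for every m ∈ M with N(m*m) = Nm, there exists an idempotent e ∈ M (e*e = e) such that Ne = Nm. Equivalently, the map e ↦ [e] from idempotents of M to idempotents of the quotient monoid M/N (of M by the congruence x ~ y ⟺ Nx = Ny) is surjective. -/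
/-!
If `S * m * m = S * m`, then right multiplication by `m` carries both `S` and `S * m` onto `S * m`.
Elements with this property form a subsemigroup, so it contains the subsemigroup generated by `m`.
When the latter is finite, it contains an idempotent.
-/

open scoped Pointwise

section Semigroup

variable {M : Type*} [Semigroup M]

theorem exists_isIdempotentElem_mem_of_finite (T : Subsemigroup M) (hne : (T : Set M).Nonempty)
    (hfin : (T : Set M).Finite) : ∃ e ∈ T, IsIdempotentElem e := by
  -- Ellis–Numakura lemma for the discrete topology, in which finite sets are compact.
  let : TopologicalSpace M := ⊥
  have : DiscreteTopology M := ⟨rfl⟩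
  exact exists_idempotent_in_compact_subsemigroup (fun _ ↦ continuous_of_discreteTopology)
    (T : Set M) hne hfin.isCompact fun _ hx _ hy ↦ T.mul_mem hx hy

theorem mul_singleton_eq_of_mem_closure {A S T : Set M} (hS : ∀ a ∈ A, S * {a} = T)
    (hT : ∀ a ∈ A, T * {a} = T) {x : M} (hx : x ∈ Subsemigroup.closure A) : S * {x} = T := by
  suffices S * {x} = T ∧ T * {x} = T from this.1
  induction hx using Subsemigroup.closure_induction with
  | mem a ha => exact ⟨hS a ha, hT a ha⟩
  | mul x y _ _ hx hy =>
    simp only [← Set.singleton_mul_singleton, ← mul_assoc, hx.1, hx.2, hy.2, and_self]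

theorem setOf_exists_mem_eq_mul_right (S : Set M) (m : M) :
    {x : M | ∃ n ∈ S, x = n * m} = S * {m} := by
  simp only [Set.mul_singleton, Set.image, eq_comm]

theorem stmt15_general (S : Set M) (m : M)
    (hfin : (Subsemigroup.closure {m} : Set M).Finite)
    (hm : {x : M | ∃ n ∈ S, x = n * (m * m)} = {x : M | ∃ n ∈ S, x = n * m}) :
    ∃ e ∈ Subsemigroup.closure {m}, e * e = e ∧
      {x : M | ∃ n ∈ S, x = n * e} = {x : M | ∃ n ∈ S, x = n * m} := by
  simp only [setOf_exists_mem_eq_mul_right] at hm ⊢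
  have hfix : S * {m} * {m} = S * {m} := by rw [mul_assoc, Set.singleton_mul_singleton, hm]
  obtain ⟨e, he_mem, he⟩ := exists_isIdempotentElem_mem_of_finite (Subsemigroup.closure {m})
    ⟨m, Subsemigroup.mem_closure_of_mem rfl⟩ hfin
  exact ⟨e, he_mem, he, mul_singleton_eq_of_mem_closure (by simp) (by simpa using hfix) he_mem⟩

end Semigroup

/-- Let `M` be a finite monoid and `N` a centric submonoid.  For every `m ∈ M` with
`N(m*m) = Nm`, there is an idempotent `e ∈ M` with `Ne = Nm`. -/
theorem stmt15 {M : Type*} [Monoid M] [Finite M] (N : Submonoid M)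
    (hcentric : ∀ m : M, {x : M | ∃ n ∈ N, x = n * m} = {x : M | ∃ n ∈ N, x = m * n})
    (m : M)
    (hm : {x : M | ∃ n ∈ N, x = n * (m * m)} = {x : M | ∃ n ∈ N, x = n * m}) :
    ∃ e : M, e * e = e ∧
      {x : M | ∃ n ∈ N, x = n * e} = {x : M | ∃ n ∈ N, x = n * m} := by
  obtain ⟨e, -, he⟩ := stmt15_general (N : Set M) m (Set.toFinite _) hm
  exact ⟨e, he⟩
end

section
/- Let M be a finite monoid, N a centric submonoid of M, and (π, V) a simple ℂ[M]-module. Let W be a simple ℂ[N]-submodule of V (for the restricted action of N). For m ∈ M, let mW = π(m)(W) = {π(m)w : w ∈ W}. Then: (1) mW is an N-invariant subspace of V, and either mW = 0 or mW is a simple ℂ[N]-module; (2) if mW ≠ 0, then the restriction of π(m) to W is a linear bijection from W onto mW. -/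
/-!
The equality `Nm = mN` makes both the image and the preimage under `π m` of an `N`-invariant
subspace `N`-invariant. Hence, for every `N`-invariant `p`, simplicity of `W` forces
`W ∩ (π m)⁻¹(p)` to be `0` or `W`. If `p ≤ mW`, then `p` is the image of this intersection, so
`p = 0` or `p = mW`. For `p = 0` the intersection is the kernel of `π m` on `W`, which is
therefore `0` unless `mW = 0`.
-/

section Invariant

variable {k M V : Type*} [Semiring k] [Monoid M] [AddCommMonoid V] [Module k V]
  {π : Representation k M V} {S : Set M} {p q W : Submodule k V} {m : M}

/-- The subspace `p` is stable under `π s` for every `s ∈ S`. When `S` is a submonoid, this says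
that `p` is a subrepresentation of the restriction of `π` to `S`. -/
def IsInvariantUnder (π : Representation k M V) (S : Set M) (p : Submodule k V) : Prop :=
  ∀ s ∈ S, ∀ v ∈ p, π s v ∈ p

/-- The subspace `W` is minimal among the nonzero `S`-invariant subspaces. When `S` is a submonoid,
this says that `W` is a simple `k[S]`-submodule of `V`, expressed inside the lattice of subspaces
of `V`. -/
structure IsSimpleUnder (π : Representation k M V) (S : Set M) (W : Submodule k V) : Prop where
  isInvariantUnder : IsInvariantUnder π S W
  ne_bot : W ≠ ⊥
  eq_bot_or_eq : ∀ p ≤ W, IsInvariantUnder π S p → p = ⊥ ∨ p = W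

namespace IsInvariantUnder

theorem bot : IsInvariantUnder π S ⊥ := by
  rintro s - v rfl
  exact map_zero (π s)

theorem inf (hp : IsInvariantUnder π S p) (hq : IsInvariantUnder π S q) :
    IsInvariantUnder π S (p ⊓ q) :=
  fun s hs v hv ↦ ⟨hp s hs v hv.1, hq s hs v hv.2⟩

theorem map (hm : ∀ s ∈ S, ∃ t ∈ S, SemiconjBy m t s) (hp : IsInvariantUnder π S p) :
    IsInvariantUnder π S (p.map (π m)) := by
  rintro s hs _ ⟨v, hv, rfl⟩
  obtain ⟨t, ht, hts⟩ := hm s hs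
  exact ⟨π t v, hp t ht v hv, LinearMap.congr_fun (hts.map π) v⟩

theorem comap (hm : ∀ s ∈ S, ∃ t ∈ S, SemiconjBy m s t) (hp : IsInvariantUnder π S p) :
    IsInvariantUnder π S (p.comap (π m)) := by
  intro s hs v hv
  obtain ⟨t, ht, hst⟩ := hm s hs
  have hcomm : π m (π s v) = π t (π m v) := LinearMap.congr_fun (hst.map π) v
  rw [Submodule.mem_comap, hcomm]
  exact hp t ht _ hv

end IsInvariantUnder

namespace IsSimpleUnder

theorem inf_comap_eq_bot_or_eq (hW : IsSimpleUnder π S W)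
    (hm : ∀ s ∈ S, ∃ t ∈ S, SemiconjBy m s t) (hp : IsInvariantUnder π S p) :
    W ⊓ p.comap (π m) = ⊥ ∨ W ⊓ p.comap (π m) = W :=
  hW.eq_bot_or_eq _ inf_le_left (hW.isInvariantUnder.inf (hp.comap hm))

theorem eq_bot_or_eq_map (hW : IsSimpleUnder π S W)
    (hm : ∀ s ∈ S, ∃ t ∈ S, SemiconjBy m s t) (hp : IsInvariantUnder π S p)
    (hpW : p ≤ W.map (π m)) : p = ⊥ ∨ p = W.map (π m) := by
  have map_inf_comap : (W ⊓ p.comap (π m)).map (π m) = p := by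
    rw [← Submodule.map_inf_eq_map_inf_comap, inf_eq_right.mpr hpW]
  rcases hW.inf_comap_eq_bot_or_eq hm hp with h | h
  · left
    rw [← map_inf_comap, h, Submodule.map_bot]
  · right
    rw [← map_inf_comap, h]

theorem map (hW : IsSimpleUnder π S W) (hm : ∀ s ∈ S, ∃ t ∈ S, SemiconjBy m t s)
    (hm' : ∀ s ∈ S, ∃ t ∈ S, SemiconjBy m s t) (hne : W.map (π m) ≠ ⊥) :
    IsSimpleUnder π S (W.map (π m)) where
  isInvariantUnder := hW.isInvariantUnder.map hm
  ne_bot := hne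
  eq_bot_or_eq _ hpW hp := hW.eq_bot_or_eq_map hm' hp hpW

theorem disjoint_ker (hW : IsSimpleUnder π S W) (hm : ∀ s ∈ S, ∃ t ∈ S, SemiconjBy m s t)
    (hne : W.map (π m) ≠ ⊥) : Disjoint W (LinearMap.ker (π m)) := by
  rcases hW.inf_comap_eq_bot_or_eq hm .bot with h | h
  · exact disjoint_iff.mpr h
  · exact absurd (le_bot_iff.mp (Submodule.map_le_iff_le_comap.mpr (inf_eq_left.mp h))) hne

end IsSimpleUnder

end Invariant

theorem stmt16_general {k M V : Type*} [Ring k] [Monoid M] [AddCommGroup V] [Module k V]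
    {π : Representation k M V} {S : Set M} {W : Submodule k V} {m : M}
    (hm : {x : M | ∃ s ∈ S, x = s * m} = {x : M | ∃ s ∈ S, x = m * s})
    (hW : IsSimpleUnder π S W) :
    (IsInvariantUnder π S (W.map (π m)) ∧
      (W.map (π m) = ⊥ ∨ IsSimpleUnder π S (W.map (π m)))) ∧
    (W.map (π m) ≠ ⊥ → Set.BijOn (π m) (W : Set V) (W.map (π m) : Set V)) := by
  have semiconj_left : ∀ s ∈ S, ∃ t ∈ S, SemiconjBy m t s := fun s hs ↦
    let ⟨t, ht, hst⟩ := hm.subset ⟨s, hs, rfl⟩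
    ⟨t, ht, hst.symm⟩
  have semiconj_right : ∀ s ∈ S, ∃ t ∈ S, SemiconjBy m s t := fun s hs ↦
    hm.superset ⟨s, hs, rfl⟩
  refine ⟨⟨hW.isInvariantUnder.map semiconj_left, ?_⟩, fun hne ↦ ?_⟩
  · exact or_iff_not_imp_left.mpr (hW.map semiconj_left semiconj_right)
  · have hinj : Set.InjOn (π m) W :=
      LinearMap.disjoint_ker_iff_injOn.mp (hW.disjoint_ker semiconj_right hne)
    exact hinj.bijOn_image

/-- Let `M` be a finite monoid, `N` a centric submonoid, `(π, V)` a simple `ℂ[M]`-module and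
`W` a simple `ℂ[N]`-submodule of `V`.  For `m ∈ M`, set `mW = π(m)(W)`.  Then (1) `mW` is
`N`-invariant and is `0` or a simple `ℂ[N]`-module; (2) if `mW ≠ 0` then `π(m)` restricts
to a linear bijection from `W` onto `mW`. -/
theorem stmt16 {M : Type*} [Monoid M] [Finite M] (N : Submonoid M)
    (hcentric : ∀ m : M, {x : M | ∃ n ∈ N, x = n * m} = {x : M | ∃ n ∈ N, x = m * n})
    {V : Type*} [AddCommGroup V] [Module ℂ V]
    (π : Representation ℂ M V)
    (hVnt : Nontrivial V)
    (hVsimple : ∀ p : Submodule ℂ V, (∀ (m : M), ∀ v ∈ p, π m v ∈ p) → p = ⊥ ∨ p = ⊤)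
    (W : Submodule ℂ V)
    (hWinv : ∀ n ∈ N, ∀ v ∈ W, π n v ∈ W)
    (hWne : W ≠ ⊥)
    (hWsimple : ∀ p : Submodule ℂ V, p ≤ W →
      (∀ n ∈ N, ∀ v ∈ p, π n v ∈ p) → p = ⊥ ∨ p = W)
    (m : M) :
    ((∀ n ∈ N, ∀ v ∈ Submodule.map (π m) W, π n v ∈ Submodule.map (π m) W) ∧
      (Submodule.map (π m) W = ⊥ ∨
        (Submodule.map (π m) W ≠ ⊥ ∧
          ∀ p : Submodule ℂ V, p ≤ Submodule.map (π m) W →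
            (∀ n ∈ N, ∀ v ∈ p, π n v ∈ p) → p = ⊥ ∨ p = Submodule.map (π m) W))) ∧
    (Submodule.map (π m) W ≠ ⊥ →
      Set.BijOn (π m) (W : Set V) (Submodule.map (π m) W : Set V)) := by
  obtain ⟨⟨hinv, hsimple⟩, hbij⟩ := stmt16_general (hcentric m) ⟨hWinv, hWne, hWsimple⟩
  exact ⟨⟨hinv, hsimple.imp_right fun h ↦ ⟨h.ne_bot, h.eq_bot_or_eq⟩⟩, hbij⟩
end

section
/- Let M be a finite monoid whose complex monoid algebra ℂ[M] is a semisimple ring, let N be a centric submonoid of M, let (π, V) be a simple ℂ[M]-module, and let (σ, W) be a simple ℂ[N]-submodule of the restriction of V to N. Let W̃ be the σ-isotypic component of V as a ℂ[N]-module, i.e. the sum of all simple ℂ[N]-submodules of V isomorphic to W, and let I = {m ∈ M : π(m)(W̃) ⊆ W̃}. Then I is a submonoid of M (containing the identity), and W̃ is a simple ℂ[I]-module. -/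
/-!
Since `m N = N m`, the operator `π m` carries a simple `N`-submodule of `V` to zero or to a simple
`N`-submodule, and isomorphic ones to isomorphic ones. Hence `π m` maps the isotypic component `W̃`
either into itself or into the sum `D` of the other isotypic components, and `W̃ ∩ D = 0`. If
`p ≠ 0` is an `I`-submodule of `W̃`, then `V = ∑ π(m) p ⊆ p + D` because `V` is simple, and the
modular law gives `p = W̃`.
-/

/-- An additive map `g` between `R`-modules with `R ∘ g = g ∘ R` as sets of maps. Unlike for a
semilinear map, no ring homomorphism `r ↦ r'` is chosen: for `g = π m` only `N m = m N` is known,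
and `m` need not be invertible. -/
structure IsCentricMap (R : Type*) {V U : Type*} [Semiring R] [AddCommMonoid V] [AddCommMonoid U]
    [Module R V] [Module R U] (g : V →+ U) : Prop where
  exists_smul_map : ∀ r : R, ∃ r' : R, ∀ v, r • g v = g (r' • v)
  exists_map_smul : ∀ r : R, ∃ r' : R, ∀ v, g (r • v) = r' • g v

namespace IsCentricMap

section Semiring

variable {R V U : Type*} [Semiring R] [AddCommMonoid V] [AddCommMonoid U] [Module R V]
  [Module R U] {g : V →+ U}

/-- The image of a submodule under a centric map, a submodule since `R ∘ g ⊆ g ∘ R`. -/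
def map (hg : IsCentricMap R g) (p : Submodule R V) : Submodule R U where
  toAddSubmonoid := p.toAddSubmonoid.map g
  smul_mem' r := by
    rintro _ ⟨v, hv, rfl⟩
    obtain ⟨r', hr'⟩ := hg.exists_smul_map r
    exact ⟨r' • v, p.smul_mem r' hv, (hr' v).symm⟩

/-- The preimage of a submodule under a centric map, a submodule since `g ∘ R ⊆ R ∘ g`. -/
def comap (hg : IsCentricMap R g) (q : Submodule R U) : Submodule R V where
  toAddSubmonoid := q.toAddSubmonoid.comap g
  smul_mem' r v hv := by
    obtain ⟨r', hr'⟩ := hg.exists_map_smul r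
    change g (r • v) ∈ q
    exact hr' v ▸ q.smul_mem r' hv

variable (hg : IsCentricMap R g)

lemma mem_comap {q : Submodule R U} {v : V} : v ∈ hg.comap q ↔ g v ∈ q := Iff.rfl

lemma mem_map_of_mem {p : Submodule R V} {v : V} (hv : v ∈ p) : g v ∈ hg.map p := ⟨v, hv, rfl⟩

lemma map_le_iff_le_comap {p : Submodule R V} {q : Submodule R U} :
    hg.map p ≤ q ↔ p ≤ hg.comap q :=
  AddSubmonoid.map_le_iff_le_comap

end Semiring

variable {R V U : Type*} [Ring R] [AddCommGroup V] [AddCommGroup U] [Module R V] [Module R U]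
  {g : V →+ U} (hg : IsCentricMap R g)

lemma isSimpleModule_map (p : Submodule R V) [IsSimpleModule R p] (hp : hg.map p ≠ ⊥) :
    IsSimpleModule R (hg.map p) := by
  have hatom : IsAtom p := isSimpleModule_iff_isAtom.1 ‹_›
  refine isSimpleModule_iff_isAtom.2 ⟨hp, fun q hq => (Submodule.eq_bot_iff q).2 fun u hu => ?_⟩
  have hdisj : Disjoint p (hg.comap q) := hatom.not_le_iff_disjoint.1 fun hle =>
    hq.not_ge (hg.map_le_iff_le_comap.2 hle)
  obtain ⟨v, hv, rfl⟩ := hq.le hu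
  rw [Submodule.disjoint_def.1 hdisj v hv hu, map_zero]

lemma injOn (p : Submodule R V) [IsSimpleModule R p] (hp : hg.map p ≠ ⊥) : Set.InjOn g p := by
  have hdisj : Disjoint p (hg.comap ⊥) :=
    (isSimpleModule_iff_isAtom.1 ‹_›).not_le_iff_disjoint.1 fun hle =>
      hp (le_bot_iff.1 (hg.map_le_iff_le_comap.2 hle))
  intro v hv w hw hvw
  refine sub_eq_zero.1 (Submodule.disjoint_def.1 hdisj _ (p.sub_mem hv hw) ?_)
  rw [hg.mem_comap, map_sub, hvw, sub_self]
  exact zero_mem _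

/-- A centric map restricted to a simple submodule that it does not kill, as an isomorphism onto
the image. It is only additive, the scalars being twisted by `r ↦ r'`. -/
noncomputable def addEquivMap (p : Submodule R V) [IsSimpleModule R p] (hp : hg.map p ≠ ⊥) :
    p ≃+ hg.map p :=
  AddEquiv.ofBijective
    (AddMonoidHom.mk' (fun v : p => (⟨g v, hg.mem_map_of_mem v.2⟩ : hg.map p))
      fun v w => Subtype.ext (map_add g (v : V) w))
    ⟨fun v w hvw => Subtype.ext (hg.injOn p hp v.2 w.2 (congrArg Subtype.val hvw)),
      fun ⟨_, v, hv, hu⟩ => ⟨⟨v, hv⟩, Subtype.ext hu⟩⟩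

lemma nonempty_linearEquiv_map {p q : Submodule R V} [IsSimpleModule R p] [IsSimpleModule R q]
    (hp : hg.map p ≠ ⊥) (hq : hg.map q ≠ ⊥) (e : p ≃ₗ[R] q) :
    Nonempty (hg.map p ≃ₗ[R] hg.map q) := by
  let gp := hg.addEquivMap p hp
  let gq := hg.addEquivMap q hq
  refine ⟨((gp.symm.trans e.toAddEquiv).trans gq).toLinearEquiv fun r u => ?_⟩
  obtain ⟨v, rfl⟩ := gp.surjective u
  obtain ⟨r', hr'⟩ := hg.exists_smul_map r
  have hgp : r • gp v = gp (r' • v) := Subtype.ext (hr' v)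
  have hgq : r • gq (e v) = gq (r' • e v) := Subtype.ext (hr' (e v))
  simp [hgp, hgq]

lemma map_isotypicComponent_eq_bot_or_le (S : Type*) [AddCommGroup S] [Module R S]
    [IsSimpleModule R S] :
    hg.map (isotypicComponent R V S) = ⊥ ∨
      ∃ c ∈ isotypicComponents R U, hg.map (isotypicComponent R V S) ≤ c := by
  by_cases! hzero : ∀ p : Submodule R V, Nonempty (p ≃ₗ[R] S) → hg.map p = ⊥
  · exact .inl <| le_bot_iff.1 <| hg.map_le_iff_le_comap.2 <| sSup_le fun p hp =>
      hg.map_le_iff_le_comap.1 (hzero p hp).le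
  · obtain ⟨p, ⟨ep⟩, hp⟩ := hzero
    have : IsSimpleModule R p := .congr ep
    refine .inr ⟨_, ⟨hg.map p, hg.isSimpleModule_map p hp, rfl⟩,
      hg.map_le_iff_le_comap.2 <| sSup_le fun q ⟨eq⟩ => hg.map_le_iff_le_comap.1 ?_⟩
    have : IsSimpleModule R q := .congr eq
    obtain hq | hq := eq_or_ne (hg.map q) ⊥
    · exact hq.le.trans bot_le
    · exact le_sSup (hg.nonempty_linearEquiv_map hq hp (eq.trans ep.symm))

lemma map_le_or_map_le_sSup_isotypicComponents_diff {g : V →+ V} (hg : IsCentricMap R g)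
    {c : Submodule R V} (hc : c ∈ isotypicComponents R V) :
    hg.map c ≤ c ∨ hg.map c ≤ sSup (isotypicComponents R V \ {c}) := by
  obtain ⟨S, hS, rfl⟩ := hc
  obtain hbot | ⟨d, hd, hle⟩ := hg.map_isotypicComponent_eq_bot_or_le S
  · exact .inl (hbot.le.trans bot_le)
  · by_cases hdc : d = isotypicComponent R V S
    · exact .inl (hle.trans_eq hdc)
    · exact .inr (hle.trans (le_sSup ⟨hd, hdc⟩))

end IsCentricMap

section SemiconjBy

variable {k A : Type*} [CommSemiring k] [Semiring A] [Algebra k A] {s : Set A} {g : A}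

variable (k g) in
/-- The pairs `(a, b)` with `g * a = b * g`. Packaging them as a subalgebra of `A × A` lets
semiconjugacy by `g` pass from generators to the algebra they generate. -/
def semiconjSubalgebra : Subalgebra k (A × A) where
  carrier := {x | SemiconjBy g x.1 x.2}
  mul_mem' h₁ h₂ := SemiconjBy.mul_right h₁ h₂
  add_mem' h₁ h₂ := SemiconjBy.add_right h₁ h₂
  algebraMap_mem' t := Algebra.commute_algebraMap_right t g

lemma exists_semiconjBy_left_of_mem_adjoin (hg : ∀ a ∈ s, ∃ b ∈ s, SemiconjBy g b a) {a : A}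
    (ha : a ∈ Algebra.adjoin k s) : ∃ b ∈ Algebra.adjoin k s, SemiconjBy g b a := by
  suffices Algebra.adjoin k s ≤ (semiconjSubalgebra k g ⊓
      (Algebra.adjoin k s).comap (AlgHom.fst k A A)).map (AlgHom.snd k A A) by
    obtain ⟨⟨b, _⟩, ⟨h, hb⟩, rfl⟩ := this ha
    exact ⟨b, hb, h⟩
  refine Algebra.adjoin_le fun a ha => ?_
  obtain ⟨b, hb, h⟩ := hg a ha
  exact ⟨(b, a), ⟨h, Algebra.subset_adjoin hb⟩, rfl⟩

lemma exists_semiconjBy_right_of_mem_adjoin (hg : ∀ a ∈ s, ∃ b ∈ s, SemiconjBy g a b) {a : A}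
    (ha : a ∈ Algebra.adjoin k s) : ∃ b ∈ Algebra.adjoin k s, SemiconjBy g a b := by
  suffices Algebra.adjoin k s ≤ (semiconjSubalgebra k g ⊓
      (Algebra.adjoin k s).comap (AlgHom.snd k A A)).map (AlgHom.fst k A A) by
    obtain ⟨⟨_, b⟩, ⟨h, hb⟩, rfl⟩ := this ha
    exact ⟨b, hb, h⟩
  refine Algebra.adjoin_le fun a ha => ?_
  obtain ⟨b, hb, h⟩ := hg a ha
  exact ⟨(a, b), ⟨h, Algebra.subset_adjoin hb⟩, rfl⟩

end SemiconjBy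

section Adjoin

variable {k V : Type*} [CommRing k] [AddCommGroup V] [Module k V] {s : Set (Module.End k V)}

lemma isCentricMap_adjoin {g : Module.End k V}
    (hleft : ∀ a ∈ s, ∃ b ∈ s, SemiconjBy g b a) (hright : ∀ a ∈ s, ∃ b ∈ s, SemiconjBy g a b) :
    IsCentricMap (Algebra.adjoin k s) g.toAddMonoidHom where
  exists_smul_map a := by
    obtain ⟨b, hb, h⟩ := exists_semiconjBy_left_of_mem_adjoin hleft a.2
    exact ⟨⟨b, hb⟩, fun v => (LinearMap.congr_fun h.eq v).symm⟩
  exists_map_smul a := by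
    obtain ⟨b, hb, h⟩ := exists_semiconjBy_right_of_mem_adjoin hright a.2
    exact ⟨⟨b, hb⟩, LinearMap.congr_fun h.eq⟩

/-- Stability of a subspace under a set of endomorphisms. For `s = π '' N` these are the
`N`-submodules, and they are the submodules over `Algebra.adjoin k s`, the image of `k[N]` in
`Module.End k V`. -/
def IsStableUnder (s : Set (Module.End k V)) (p : Submodule k V) : Prop :=
  ∀ a ∈ s, ∀ v ∈ p, a v ∈ p

lemma isStableUnder_iff_exists_restrictScalars_eq {p : Submodule k V} :
    IsStableUnder s p ↔ ∃ q : Submodule (Algebra.adjoin k s) V, q.restrictScalars k = p := by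
  constructor
  · intro hp
    have apply_mem (a : Module.End k V) (ha : a ∈ Algebra.adjoin k s) : ∀ v ∈ p, a v ∈ p := by
      induction ha using Algebra.adjoin_induction with
      | mem a ha => exact hp a ha
      | algebraMap t => exact fun v hv => p.smul_mem t hv
      | add a b _ _ iha ihb => exact fun v hv => p.add_mem (iha v hv) (ihb v hv)
      | mul _ _ _ _ iha ihb => exact fun v hv => iha _ (ihb v hv)
    exact ⟨⟨p.toAddSubmonoid, fun a v => apply_mem a a.2 v⟩, rfl⟩
  · rintro ⟨q, rfl⟩ a ha v hv
    exact q.smul_mem ⟨a, Algebra.subset_adjoin ha⟩ hv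

lemma isSimpleModule_adjoin_iff (p : Submodule (Algebra.adjoin k s) V) :
    IsSimpleModule (Algebra.adjoin k s) p ↔ p.restrictScalars k ≠ ⊥ ∧
      ∀ q ≤ p.restrictScalars k, IsStableUnder s q → q = ⊥ ∨ q = p.restrictScalars k := by
  have restrictScalars_inj {q r : Submodule (Algebra.adjoin k s) V} :
      q.restrictScalars k = r.restrictScalars k ↔ q = r :=
    (Submodule.restrictScalars_injective k _ V).eq_iff
  rw [isSimpleModule_iff_isAtom, ← Submodule.restrictScalars_bot k (Algebra.adjoin k s) V,
    Ne, restrictScalars_inj]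
  constructor
  · refine fun hatom => ⟨hatom.ne_bot, fun q hqp hq => ?_⟩
    obtain ⟨q, rfl⟩ := isStableUnder_iff_exists_restrictScalars_eq.1 hq
    rw [restrictScalars_inj, restrictScalars_inj]
    exact hatom.le_iff.1 hqp
  · refine fun ⟨hne, hsimple⟩ => ⟨hne, fun q hq => ?_⟩
    have hstable := isStableUnder_iff_exists_restrictScalars_eq.2 ⟨q, rfl⟩
    have hor := hsimple _ hq.le hstable
    rw [restrictScalars_inj, restrictScalars_inj] at hor
    exact hor.resolve_right hq.ne

lemma nonempty_linearEquiv_adjoin_iff (p q : Submodule (Algebra.adjoin k s) V) :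
    Nonempty (p ≃ₗ[Algebra.adjoin k s] q) ↔
      ∃ f : p.restrictScalars k ≃ₗ[k] q.restrictScalars k, ∀ a ∈ s,
        ∀ (x : p.restrictScalars k) (hx : a x ∈ p.restrictScalars k)
          (hy : a (f x) ∈ q.restrictScalars k), f ⟨a x, hx⟩ = ⟨a (f x), hy⟩ := by
  constructor
  · rintro ⟨e⟩
    exact ⟨e.restrictScalars k, fun a ha x _ _ => e.map_smul ⟨a, Algebra.subset_adjoin ha⟩ x⟩
  · rintro ⟨f, hf⟩
    have map_smul (a : Module.End k V) (ha : a ∈ Algebra.adjoin k s) :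
        ∀ x, f ((⟨a, ha⟩ : Algebra.adjoin k s) • x) = (⟨a, ha⟩ : Algebra.adjoin k s) • f x := by
      induction ha using Algebra.adjoin_induction with
      | mem a ha => exact fun x => hf a ha x _ _
      | algebraMap t => exact f.map_smul t
      | add a b _ _ iha ihb =>
        exact fun x => (f.map_add _ _).trans (congrArg₂ _ (iha x) (ihb x))
      | mul a b _ _ iha ihb => exact fun x => (iha _).trans (congrArg _ (ihb x))
    exact ⟨f.toAddEquiv.toLinearEquiv fun a => map_smul a a.2⟩

lemma restrictScalars_isotypicComponent_adjoin (W : Submodule (Algebra.adjoin k s) V)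
    [IsSimpleModule (Algebra.adjoin k s) W] :
    (isotypicComponent (Algebra.adjoin k s) V W).restrictScalars k =
      sSup {p : Submodule k V | IsStableUnder s p ∧ p ≠ ⊥ ∧
        (∀ q ≤ p, IsStableUnder s q → q = ⊥ ∨ q = p) ∧
        ∃ f : p ≃ₗ[k] W.restrictScalars k, ∀ a ∈ s, ∀ (x : p) (hx : a x ∈ p)
          (hy : a (f x) ∈ W.restrictScalars k), f ⟨a x, hx⟩ = ⟨a (f x), hy⟩} := by
  rw [isotypicComponent, Submodule.restrictScalars_sSup]
  congr 1
  ext p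
  constructor
  · rintro ⟨q, ⟨e⟩, rfl⟩
    have : IsSimpleModule (Algebra.adjoin k s) q := .congr (N := W) e
    obtain ⟨hne, hsimple⟩ := (isSimpleModule_adjoin_iff q).1 this
    exact ⟨isStableUnder_iff_exists_restrictScalars_eq.2 ⟨q, rfl⟩, hne, hsimple,
      (nonempty_linearEquiv_adjoin_iff q W).1 ⟨e⟩⟩
  · rintro ⟨hp, -, -, hf⟩
    obtain ⟨q, rfl⟩ := isStableUnder_iff_exists_restrictScalars_eq.1 hp
    exact ⟨q, (nonempty_linearEquiv_adjoin_iff q W).2 hf, rfl⟩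

end Adjoin

section IrreducibleRepresentation

variable {k M V : Type*} [Ring k] [Monoid M] [AddCommGroup V] [Module k V]
  {π : Representation k M V}
  (hπ : ∀ p : Submodule k V, (∀ m, ∀ v ∈ p, π m v ∈ p) → p = ⊥ ∨ p = ⊤)
include hπ

lemma iSup_map_eq_top {p : Submodule k V} (hp : p ≠ ⊥) : ⨆ m, p.map (π m) = ⊤ := by
  have hle : p ≤ ⨆ m, p.map (π m) := fun v hv => Submodule.mem_iSup_of_mem 1 ⟨v, hv, by simp⟩
  refine (hπ _ fun m => ?_).resolve_left (ne_bot_of_le_ne_bot hp hle)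
  suffices (⨆ n, p.map (π n)) ≤ (⨆ n, p.map (π n)).comap (π m) from this
  refine iSup_le fun n => Submodule.map_le_iff_le_comap.1 ?_
  rw [← Submodule.map_comp, ← Module.End.mul_eq_comp, ← map_mul]
  exact le_iSup (fun n => p.map (π n)) (m * n)

theorem eq_bot_or_eq_of_le_of_disjoint {c d p : Submodule k V} (hcd : Disjoint c d)
    (hmap : ∀ m, c.map (π m) ≤ c ∨ c.map (π m) ≤ d) (hpc : p ≤ c)
    (hp : ∀ m, c.map (π m) ≤ c → p.map (π m) ≤ p) : p = ⊥ ∨ p = c := by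
  refine or_iff_not_imp_left.2 fun hp0 => ?_
  have htop : p ⊔ d = ⊤ := by
    refine top_le_iff.1 ((iSup_map_eq_top hπ hp0).ge.trans (iSup_le fun m => ?_))
    obtain hc | hd := hmap m
    · exact (hp m hc).trans le_sup_left
    · exact ((Submodule.map_mono hpc).trans hd).trans le_sup_right
  exact eq_of_le_of_inf_le_of_sup_le hpc (hcd.eq_bot.le.trans bot_le) (le_top.trans_eq htop.symm)

end IrreducibleRepresentation

/-- A centric submonoid: its left and right translates by each element of the monoid agree. -/
def IsCentricSubmonoid {M : Type*} [Monoid M] (N : Submonoid M) : Prop :=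
  ∀ m : M, {x : M | ∃ n ∈ N, x = n * m} = {x : M | ∃ n ∈ N, x = m * n}

namespace IsCentricSubmonoid

variable {k M V : Type*} [CommRing k] [Monoid M] [AddCommGroup V] [Module k V]
  {N : Submonoid M} (hN : IsCentricSubmonoid N) {π : Representation k M V}
include hN

lemma isCentricMap (π : Representation k M V) (m : M) :
    IsCentricMap (Algebra.adjoin k (π '' N)) (π m).toAddMonoidHom := by
  refine isCentricMap_adjoin ?_ ?_
  · rintro _ ⟨n, hn, rfl⟩
    obtain ⟨n', hn', h⟩ := (hN m).le ⟨n, hn, rfl⟩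
    exact ⟨π n', ⟨n', hn', rfl⟩, SemiconjBy.map h.symm π⟩
  · rintro _ ⟨n, hn, rfl⟩
    obtain ⟨n', hn', h⟩ := (hN m).ge ⟨n, hn, rfl⟩
    exact ⟨π n', ⟨n', hn', rfl⟩, SemiconjBy.map h π⟩

theorem eq_bot_or_eq_of_mem_isotypicComponents
    (hπ : ∀ p : Submodule k V, (∀ m, ∀ v ∈ p, π m v ∈ p) → p = ⊥ ∨ p = ⊤)
    {c : Submodule (Algebra.adjoin k (π '' N)) V}
    (hc : c ∈ isotypicComponents (Algebra.adjoin k (π '' N)) V) {p : Submodule k V}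
    (hpc : p ≤ c.restrictScalars k) (hp : ∀ m, (∀ v ∈ c, π m v ∈ c) → ∀ v ∈ p, π m v ∈ p) :
    p = ⊥ ∨ p = c.restrictScalars k := by
  let d := sSup (isotypicComponents (Algebra.adjoin k (π '' N)) V \ {c})
  have hcd : Disjoint c d := sSupIndep_isotypicComponents _ V hc
  have hcd' : Disjoint (c.restrictScalars k) (d.restrictScalars k) :=
    Submodule.disjoint_def.2 fun v hvc hvd => Submodule.disjoint_def.1 hcd v hvc hvd
  exact eq_bot_or_eq_of_le_of_disjoint hπ hcd'
    (fun m => (hN.isCentricMap π m).map_le_or_map_le_sSup_isotypicComponents_diff hc) hpc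
    fun m hm => Submodule.map_le_iff_le_comap.2 (hp m (Submodule.map_le_iff_le_comap.1 hm))

end IsCentricSubmonoid

theorem stmt17_general {k M V : Type*} [CommRing k] [Monoid M] [AddCommGroup V] [Module k V]
    (π : Representation k M V)
    (hVsimple : ∀ p : Submodule k V, (∀ (m : M), ∀ v ∈ p, π m v ∈ p) → p = ⊥ ∨ p = ⊤)
    (N : Submonoid M) (hcentric : IsCentricSubmonoid N)
    (W : Submodule k V)
    (hWinv : ∀ n ∈ N, ∀ v ∈ W, π n v ∈ W)
    (hWne : W ≠ ⊥)
    (hWsimple : ∀ p : Submodule k V, p ≤ W →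
      (∀ n ∈ N, ∀ v ∈ p, π n v ∈ p) → p = ⊥ ∨ p = W)
    (Wt : Submodule k V)
    (hWt : Wt = sSup {p : Submodule k V |
      (∀ n ∈ N, ∀ v ∈ p, π n v ∈ p) ∧ p ≠ ⊥ ∧
      (∀ q : Submodule k V, q ≤ p → (∀ n ∈ N, ∀ v ∈ q, π n v ∈ q) → q = ⊥ ∨ q = p) ∧
      (∃ f : ↥p ≃ₗ[k] ↥W, ∀ (n : M), n ∈ N → ∀ (x : ↥p)
        (hx : π n (x : V) ∈ p) (hy : π n ((f x : W) : V) ∈ W),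
        f ⟨π n (x : V), hx⟩ = ⟨π n ((f x : W) : V), hy⟩)})
    (I : Set M) (hI : I = {m : M | ∀ v ∈ Wt, π m v ∈ Wt}) :
    ((1 : M) ∈ I ∧ ∀ a ∈ I, ∀ b ∈ I, a * b ∈ I) ∧
    (Wt ≠ ⊥ ∧ ∀ p : Submodule k V, p ≤ Wt →
      (∀ m ∈ I, ∀ v ∈ p, π m v ∈ p) → p = ⊥ ∨ p = Wt) := by
  have stable_iff (p : Submodule k V) :
      (∀ n ∈ N, ∀ v ∈ p, π n v ∈ p) ↔ IsStableUnder (π '' N) p :=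
    (Set.forall_mem_image (p := fun a : Module.End k V => ∀ v ∈ p, a v ∈ p)).symm
  simp only [stable_iff] at hWinv hWsimple hWt
  obtain ⟨W, rfl⟩ := isStableUnder_iff_exists_restrictScalars_eq.1 hWinv
  have hW : IsSimpleModule (Algebra.adjoin k (π '' N)) W :=
    (isSimpleModule_adjoin_iff W).2 ⟨hWne, hWsimple⟩
  obtain rfl : Wt = (isotypicComponent (Algebra.adjoin k (π '' N)) V W).restrictScalars k := by
    rw [hWt, restrictScalars_isotypicComponent_adjoin]
    simp only [Set.forall_mem_image, SetLike.mem_coe]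
  subst hI
  refine ⟨⟨by simp, fun a ha b hb v hv => ?_⟩, ?_, fun p hpc hp => ?_⟩
  · rw [map_mul]
    exact ha _ (hb v hv)
  · exact ne_bot_of_le_ne_bot hWne fun v hv => Submodule.le_isotypicComponent W hv
  · exact hcentric.eq_bot_or_eq_of_mem_isotypicComponents hVsimple ⟨W, hW, rfl⟩ hpc hp

/-- Let `M` be a finite monoid with `ℂ[M]` semisimple, `N` a centric submonoid, `(π, V)` a
simple `ℂ[M]`-module and `(σ, W)` a simple `ℂ[N]`-submodule of the restriction of `V` to `N`.
Let `W̃` be the `σ`-isotypic component of `V` as a `ℂ[N]`-module and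
`I = {m ∈ M : π(m)(W̃) ⊆ W̃}`.  Then `I` is a submonoid of `M` and `W̃` is a simple
`ℂ[I]`-module. -/
theorem stmt17 {M : Type*} [Monoid M] [Finite M]
    (hM : IsSemisimpleRing (MonoidAlgebra ℂ M))
    (N : Submonoid M)
    (hcentric : ∀ m : M, {x : M | ∃ n ∈ N, x = n * m} = {x : M | ∃ n ∈ N, x = m * n})
    {V : Type*} [AddCommGroup V] [Module ℂ V]
    (π : Representation ℂ M V)
    (hVnt : Nontrivial V)
    (hVsimple : ∀ p : Submodule ℂ V, (∀ (m : M), ∀ v ∈ p, π m v ∈ p) → p = ⊥ ∨ p = ⊤)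
    (W : Submodule ℂ V)
    (hWinv : ∀ n ∈ N, ∀ v ∈ W, π n v ∈ W)
    (hWne : W ≠ ⊥)
    (hWsimple : ∀ p : Submodule ℂ V, p ≤ W →
      (∀ n ∈ N, ∀ v ∈ p, π n v ∈ p) → p = ⊥ ∨ p = W)
    (Wt : Submodule ℂ V)
    (hWt : Wt = sSup {p : Submodule ℂ V |
      (∀ n ∈ N, ∀ v ∈ p, π n v ∈ p) ∧ p ≠ ⊥ ∧
      (∀ q : Submodule ℂ V, q ≤ p → (∀ n ∈ N, ∀ v ∈ q, π n v ∈ q) → q = ⊥ ∨ q = p) ∧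
      (∃ f : ↥p ≃ₗ[ℂ] ↥W, ∀ (n : M), n ∈ N → ∀ (x : ↥p)
        (hx : π n (x : V) ∈ p) (hy : π n ((f x : W) : V) ∈ W),
        f ⟨π n (x : V), hx⟩ = ⟨π n ((f x : W) : V), hy⟩)})
    (I : Set M) (hI : I = {m : M | ∀ v ∈ Wt, π m v ∈ Wt}) :
    ((1 : M) ∈ I ∧ ∀ a ∈ I, ∀ b ∈ I, a * b ∈ I) ∧
    (Wt ≠ ⊥ ∧ ∀ p : Submodule ℂ V, p ≤ Wt →
      (∀ m ∈ I, ∀ v ∈ p, π m v ∈ p) → p = ⊥ ∨ p = Wt) :=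
  stmt17_general π hVsimple N hcentric W hWinv hWne hWsimple Wt hWt I hI
end

section
/- Let M1 and M2 be finite monoids whose complex monoid algebras ℂ[M1] and ℂ[M2] are semisimple rings, let W be a finite-dimensional complex vector space, and let ρ : M1 × M2 → End_ℂ(W) be a monoid homomorphism into the multiplicative monoid of linear endomorphisms of W. Let A be the ℂ-subalgebra of End_ℂ(W) generated by {ρ(m1, 1) : m1 ∈ M1} and B the ℂ-subalgebra generated by {ρ(1, m2) : m2 ∈ M2}. Then B equals the centralizer of A in End_ℂ(W) if and only if A equals the centralizer of B in End_ℂ(W). -/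
/-!
Let `A` be an algebra of endomorphisms of `W` over which `W` is a semisimple module. By the Jacobson
density theorem, an endomorphism commuting with every `A`-linear map agrees with an element of `A`
on any finite subset of `W`; if `W` is finitely generated it therefore lies in `A`, so `A` is its
own double centralizer. When this holds for both `A` and `B`, taking centralizers turns either of
`B = A'` and `A = B'` into the other. An algebra generated by a representation of a monoid `M` is a
quotient of the monoid algebra of `M`, so it inherits semisimplicity.
-/

section DoubleCentralizer

variable {k W : Type*} [CommRing k] [AddCommGroup W] [Module k W]

theorem restrictScalars_mem_centralizer {A : Subalgebra k (Module.End k W)} (g : Module.End A W) :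
    g.restrictScalars k ∈ Subalgebra.centralizer k (A : Set (Module.End k W)) :=
  Subalgebra.mem_centralizer_iff k |>.mpr fun a ha =>
    LinearMap.ext fun w => (g.map_smul (⟨a, ha⟩ : A) w).symm

theorem centralizer_centralizer_eq_self (A : Subalgebra k (Module.End k W))
    [IsSemisimpleModule A W] [Module.Finite (Module.End A W) W] :
    Subalgebra.centralizer k
      (Subalgebra.centralizer k (A : Set (Module.End k W)) : Set (Module.End k W)) = A := by
  refine le_antisymm (fun f hf => ?_) (Subalgebra.le_centralizer_centralizer k)
  let F : Module.End (Module.End A W) W :=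
    { f with
      map_smul' := fun g w =>
        (LinearMap.congr_fun (hf _ (restrictScalars_mem_centralizer g)) w).symm }
  obtain ⟨a, ha⟩ := Module.Finite.toModuleEnd_moduleEnd_surjective F
  have hfa : (a : Module.End k W) = f := LinearMap.ext fun w => LinearMap.congr_fun ha w
  exact hfa ▸ a.2

theorem eq_centralizer_iff_eq_centralizer [Module.Finite k W]
    (A B : Subalgebra k (Module.End k W)) [IsSemisimpleModule A W] [IsSemisimpleModule B W] :
    B = Subalgebra.centralizer k (A : Set (Module.End k W)) ↔
      A = Subalgebra.centralizer k (B : Set (Module.End k W)) := by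
  have : Module.Finite (Module.End A W) W := .of_restrictScalars_finite k _ _
  have : Module.Finite (Module.End B W) W := .of_restrictScalars_finite k _ _
  constructor
  · rintro rfl
    exact (centralizer_centralizer_eq_self A).symm
  · rintro rfl
    exact (centralizer_centralizer_eq_self B).symm

end DoubleCentralizer

section MonoidAlgebra

variable {k M R : Type*} [Monoid M]

theorem adjoin_range_eq_range_monoidAlgebra_lift [CommSemiring k] [Semiring R] [Algebra k R]
    (f : M →* R) :
    Algebra.adjoin k (Set.range f) = (MonoidAlgebra.lift k R M f).range := by
  apply le_antisymm
  · rw [Algebra.adjoin_le_iff]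
    rintro _ ⟨m, rfl⟩
    exact ⟨MonoidAlgebra.of k M m, MonoidAlgebra.lift_of f m⟩
  · rintro _ ⟨x, rfl⟩
    change MonoidAlgebra.lift k R M f x ∈ _
    rw [MonoidAlgebra.lift_apply]
    exact Subalgebra.sum_mem _ fun m _ =>
      Subalgebra.smul_mem _ (Algebra.subset_adjoin (Set.mem_range_self m)) _

theorem isSemisimpleRing_adjoin_range [CommRing k] [Ring R] [Algebra k R]
    [IsSemisimpleRing (MonoidAlgebra k M)] (f : M →* R) :
    IsSemisimpleRing (Algebra.adjoin k (Set.range f)) := by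
  rw [adjoin_range_eq_range_monoidAlgebra_lift]
  exact RingHom.isSemisimpleRing_of_surjective
    (MonoidAlgebra.lift k R M f).rangeRestrict.toRingHom
    (MonoidAlgebra.lift k R M f).rangeRestrict_surjective

end MonoidAlgebra

theorem stmt19_general {k M₁ M₂ W : Type*} [CommRing k] [Monoid M₁] [Monoid M₂]
    [IsSemisimpleRing (MonoidAlgebra k M₁)] [IsSemisimpleRing (MonoidAlgebra k M₂)]
    [AddCommGroup W] [Module k W] [Module.Finite k W]
    (ρ₁ : M₁ →* Module.End k W) (ρ₂ : M₂ →* Module.End k W) :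
    Algebra.adjoin k (Set.range ρ₂) =
        Subalgebra.centralizer k (Algebra.adjoin k (Set.range ρ₁) : Set (Module.End k W)) ↔
      Algebra.adjoin k (Set.range ρ₁) =
        Subalgebra.centralizer k (Algebra.adjoin k (Set.range ρ₂) : Set (Module.End k W)) := by
  have := isSemisimpleRing_adjoin_range (k := k) ρ₁
  have := isSemisimpleRing_adjoin_range (k := k) ρ₂
  exact eq_centralizer_iff_eq_centralizer _ _

/-- Double-commutant symmetry: let `M₁, M₂` be finite monoids with semisimple complex monoid
algebras, `W` a finite-dimensional complex vector space and `ρ : M₁ × M₂ → End_ℂ(W)` a monoid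
homomorphism.  With `A` the subalgebra generated by the `ρ(m₁, 1)` and `B` the subalgebra
generated by the `ρ(1, m₂)`, `B` is the centralizer of `A` iff `A` is the centralizer of `B`. -/
theorem stmt19 {M1 M2 : Type*} [Monoid M1] [Monoid M2] [Finite M1] [Finite M2]
    (h1 : IsSemisimpleRing (MonoidAlgebra ℂ M1))
    (h2 : IsSemisimpleRing (MonoidAlgebra ℂ M2))
    {W : Type*} [AddCommGroup W] [Module ℂ W] [FiniteDimensional ℂ W]
    (ρ : (M1 × M2) →* Module.End ℂ W)
    (A B : Subalgebra ℂ (Module.End ℂ W))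
    (hA : A = Algebra.adjoin ℂ (Set.range fun m1 : M1 => ρ (m1, 1)))
    (hB : B = Algebra.adjoin ℂ (Set.range fun m2 : M2 => ρ (1, m2))) :
    B = Subalgebra.centralizer ℂ (A : Set (Module.End ℂ W)) ↔
      A = Subalgebra.centralizer ℂ (B : Set (Module.End ℂ W)) := by
  subst hA hB
  exact stmt19_general (ρ.comp (MonoidHom.inl M1 M2)) (ρ.comp (MonoidHom.inr M1 M2))
end
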